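/- Let C_n = (V, E, w) be a vertex-weighted oriented n-cycle with w(x) ≥ 2 for every vertex x, with edge ideal I(C_n) = (x_{i−1} x_i^{w_i} : 1 ≤ i ≤ n) (indices mod n). Then for every integer t ≥ 1: reg(I(C_n)^t) = (Σ_{x∈V} w(x)) − n + 1 + (t−1)(w+1), where w = max{w(x) : x ∈ V}. -/

import Mathlib

open MvPolynomial

noncomputable section

namespace PaperReg

variable (k : Type) [Field k] (σ : Type)

/-- A graded free resolution of a homogeneous ideal `I` of `MvPolynomial σ k`:
finite-rank free modules `Fin (rk i) →₀ S` with basis elements of degrees `deg i`,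
degree-preserving differentials, exact, augmented onto `I`. -/
structure GradedFreeRes (I : Ideal (MvPolynomial σ k)) where
  rk : ℕ → ℕ
  deg : (i : ℕ) → Fin (rk i) → ℕ
  aug : (Fin (rk 0) →₀ MvPolynomial σ k) →ₗ[MvPolynomial σ k] MvPolynomial σ k
  d : (i : ℕ) →
    ((Fin (rk (i + 1)) →₀ MvPolynomial σ k) →ₗ[MvPolynomial σ k] (Fin (rk i) →₀ MvPolynomial σ k))
  aug_range : LinearMap.range aug = I
  exact_zero : LinearMap.range (d 0) = LinearMap.ker aug
  exact_succ : ∀ i, LinearMap.range (d (i + 1)) = LinearMap.ker (d i)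
  aug_graded : ∀ b, (aug (Finsupp.single b 1)).IsHomogeneous (deg 0 b)
  d_graded : ∀ i b c, (d i (Finsupp.single b 1)) c = 0 ∨
    ∃ m, deg (i + 1) b = deg i c + m ∧ ((d i (Finsupp.single b 1)) c).IsHomogeneous m

/-- The `(i,j)`-th graded Betti number of `I`: the minimal number of degree-`j` basis
elements in homological position `i`, over all graded free resolutions of `I`
(achieved by the minimal graded free resolution). -/
def betti (I : Ideal (MvPolynomial σ k)) (i j : ℕ) : ℕ :=
  sInf { r | ∃ F : GradedFreeRes k σ I,
    r = (Finset.univ.filter (fun b => F.deg i b = j)).card }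

/-- Castelnuovo–Mumford regularity: `reg I = max { j - i | betti I i j ≠ 0 }`. -/
def reg (I : Ideal (MvPolynomial σ k)) : ℕ :=
  sSup { r | ∃ i j : ℕ, betti k σ I i j ≠ 0 ∧ r = j - i }

/-- The monic monomial with exponent vector `a`. -/
def mon (a : σ →₀ ℕ) : MvPolynomial σ k := monomial a 1

/-- `I` is a monomial ideal. -/
def IsMonomialIdeal (I : Ideal (MvPolynomial σ k)) : Prop :=
  ∃ A : Set (σ →₀ ℕ), I = Ideal.span (mon k σ '' A)

/-- The exponent vectors of the unique minimal set of monomial generators of a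
monomial ideal: monomials of `I` minimal with respect to divisibility. -/
def minGens (I : Ideal (MvPolynomial σ k)) : Set (σ →₀ ℕ) :=
  { a | mon k σ a ∈ I ∧ ∀ b : σ →₀ ℕ, mon k σ b ∈ I → b ≤ a → b = a }

/-- The support of a monomial ideal: variables appearing in its minimal generators. -/
def isupp (I : Ideal (MvPolynomial σ k)) : Set σ :=
  ⋃ a ∈ minGens k σ I, ↑a.support

variable (n : ℕ) [NeZero n]

/-- The exponent vector of the `i`-th generator `L_i = x_{i-1} x_i ^ (w i)` of the
edge ideal of the vertex-weighted oriented `n`-cycle (indices mod `n`). -/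
def cycE (w : Fin n → ℕ) (i : Fin n) : Fin n →₀ ℕ :=
  Finsupp.single (i - 1) 1 + Finsupp.single i (w i)

/-- The generator `L_i = x_{i-1} x_i ^ (w i)`. -/
def cycL (w : Fin n → ℕ) (i : Fin n) : MvPolynomial (Fin n) k :=
  monomial (cycE n w i) (1 : k)

/-- The edge ideal of the vertex-weighted oriented `n`-cycle with weights `w`. -/
def cycIdeal (w : Fin n → ℕ) : Ideal (MvPolynomial (Fin n) k) :=
  Ideal.span (Set.range (cycL k n w))

set_option linter.unusedSectionVars false
set_option linter.unusedVariables false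
set_option linter.style.longLine false
section Framework

variable {k : Type} [Field k] {σ : Type}

/-- `p` is homogeneous of degree `D` when `1` is placed in degree `d`. -/
def Hm (d : ℕ) (p : MvPolynomial σ k) (D : ℕ) : Prop :=
  ∀ a, coeff a p ≠ 0 → a.degree + d = D

theorem Hm.zero (d D : ℕ) : Hm d (0 : MvPolynomial σ k) D := by
  intro a h; simp at h

theorem Hm.add {d D : ℕ} {p q : MvPolynomial σ k} (hp : Hm d p D) (hq : Hm d q D) :
    Hm d (p + q) D := by
  intro a h
  by_cases h1 : coeff a p = 0
  · by_cases h2 : coeff a q = 0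
    · simp [h1, h2] at h
    · exact hq a h2
  · exact hp a h1

theorem Hm.neg {d D : ℕ} {p : MvPolynomial σ k} (hp : Hm d p D) : Hm d (-p) D := by
  intro a h
  apply hp a
  simpa using h

theorem Hm.mul {d D e : ℕ} {p q : MvPolynomial σ k} (hp : Hm 0 p e) (hq : Hm d q D) :
    Hm d (p * q) (e + D) := by
  classical
  intro a h
  rw [coeff_mul] at h
  obtain ⟨⟨x, y⟩, hxy, hne⟩ := Finset.exists_ne_zero_of_sum_ne_zero h
  have hx : coeff x p ≠ 0 := left_ne_zero_of_mul hne
  have hy : coeff y q ≠ 0 := right_ne_zero_of_mul hne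
  have := hp x hx
  have := hq y hy
  have hxy' : x + y = a := by simpa using hxy
  rw [← hxy', map_add]
  omega

theorem Hm.exists {d D : ℕ} {p : MvPolynomial σ k} (hp : Hm d p D) (h0 : p ≠ 0) :
    ∃ m, D = d + m ∧ Hm 0 p m := by
  obtain ⟨a, ha⟩ := MvPolynomial.ne_zero_iff.1 h0
  have h1 := hp a ha
  refine ⟨a.degree, by omega, fun b hb => ?_⟩
  have := hp b hb
  omega

theorem Hm.isHomogeneous {p : MvPolynomial σ k} {m : ℕ} (hp : Hm 0 p m) : p.IsHomogeneous m := by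
  intro a ha
  have := hp a ha
  rw [← this, Finsupp.degree_eq_weight_one]
  rfl

theorem Hm.of_isHomogeneous {p : MvPolynomial σ k} {m : ℕ} (hp : p.IsHomogeneous m) :
    Hm 0 p m := by
  intro a ha
  have := hp ha
  rw [← this, Finsupp.degree_eq_weight_one]
  rfl

variable (k σ) in
/-- A graded module over the polynomial ring. -/
structure GMod where
  M : Type
  [ac : AddCommGroup M]
  [md : Module (MvPolynomial σ k) M]
  gr : ℕ → AddSubgroup M
  smul_mem : ∀ (e D : ℕ) (p : MvPolynomial σ k) (m : M), Hm 0 p e → m ∈ gr D → p • m ∈ gr (e + D)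

attribute [instance] GMod.ac GMod.md

/-- The graded free module with basis degrees `deg`. -/
@[reducible] def FreeG {ι : Type} (deg : ι → ℕ) : GMod k σ where
  M := ι → MvPolynomial σ k
  gr D :=
    { carrier := {v | ∀ i, Hm (deg i) (v i) D}
      add_mem' := fun ha hb i => (ha i).add (hb i)
      zero_mem' := fun i => Hm.zero _ _
      neg_mem' := fun ha i => (ha i).neg }
  smul_mem := fun e D p m hp hm i => hp.mul (hm i)

/-- An ideal as a graded module, shifted by `d`. -/
@[reducible] def IdealG (J : Ideal (MvPolynomial σ k)) (d : ℕ) : GMod k σ where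
  M := J
  gr D :=
    { carrier := {v | Hm d (v : MvPolynomial σ k) D}
      add_mem' := fun ha hb => Hm.add ha hb
      zero_mem' := Hm.zero _ _
      neg_mem' := fun ha => Hm.neg ha }
  smul_mem := fun e D p m hp hm => Hm.mul hp hm

/-- Direct sum of graded modules. -/
@[reducible] def ProdG (A B : GMod k σ) : GMod k σ where
  M := A.M × B.M
  gr D := (A.gr D).prod (B.gr D)
  smul_mem := fun e D p m hp hm => ⟨A.smul_mem e D p m.1 hp hm.1, B.smul_mem e D p m.2 hp hm.2⟩

/-- A submodule with the induced grading. -/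
@[reducible] def SubG (A : GMod k σ) (N : Submodule (MvPolynomial σ k) A.M) : GMod k σ where
  M := N
  gr D := (A.gr D).comap N.subtype.toAddMonoidHom
  smul_mem := fun e D p m hp hm => A.smul_mem e D p m hp hm

theorem mem_subG {A : GMod k σ} {N : Submodule (MvPolynomial σ k) A.M} {D : ℕ} {x : N} :
    (x : N) ∈ (SubG A N).gr D ↔ (x : A.M) ∈ A.gr D := Iff.rfl

/-- Graded short exact sequences. -/
structure SES (A B C : GMod k σ) where
  i : A.M →ₗ[MvPolynomial σ k] B.M
  q : B.M →ₗ[MvPolynomial σ k] C.M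
  inj : Function.Injective i
  surj : Function.Surjective q
  qi : ∀ a, q (i a) = 0
  ex : ∀ b, q b = 0 → ∃ a, i a = b
  gi : ∀ D a, i a ∈ B.gr D ↔ a ∈ A.gr D
  gq : ∀ D b, b ∈ B.gr D → q b ∈ C.gr D
  gl : ∀ D c, c ∈ C.gr D → ∃ b ∈ B.gr D, q b = c

/-- `M` has a graded free resolution of length `< p` with generators of the `i`-th
module in degrees at most `R + i`. -/
def RegN : ℕ → GMod k σ → ℕ → Prop
  | 0, M, _ => Subsingleton M.M
  | p + 1, M, R => ∃ (ι : Type) (_ : Fintype ι) (_ : DecidableEq ι) (deg : ι → ℕ)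
      (f : (ι → MvPolynomial σ k) →ₗ[MvPolynomial σ k] M.M),
      (∀ i, deg i ≤ R) ∧ Function.Surjective f ∧ (∀ i, f (Pi.single i 1) ∈ M.gr (deg i)) ∧
      (∀ D m, m ∈ M.gr D → ∃ v : ι → MvPolynomial σ k, v ∈ (FreeG (k := k) (σ := σ) deg).gr D ∧ f v = m) ∧
      RegN p (SubG (FreeG deg) (LinearMap.ker f)) (R + 1)

theorem free_map_gr {ι : Type} [Fintype ι] [DecidableEq ι] {deg : ι → ℕ} {M : GMod k σ}
    (f : (ι → MvPolynomial σ k) →ₗ[MvPolynomial σ k] M.M)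
    (hf : ∀ i, f (Pi.single i 1) ∈ M.gr (deg i)) (D : ℕ) (v : ι → MvPolynomial σ k)
    (hv : v ∈ (FreeG (k := k) (σ := σ) deg).gr D) : f v ∈ M.gr D := by
  have h1 : v = ∑ i, v i • (Pi.single i (1 : MvPolynomial σ k) : ι → MvPolynomial σ k) := by
    conv_lhs => rw [← Finset.univ_sum_single v]
    refine Finset.sum_congr rfl fun i _ => ?_
    rw [← Pi.single_smul]
    simp
  rw [h1, map_sum]
  refine AddSubgroup.sum_mem _ fun i _ => ?_
  rw [map_smul]
  by_cases h0 : v i = 0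
  · rw [h0, zero_smul]; exact AddSubgroup.zero_mem _
  · obtain ⟨m, hm, hh⟩ := (hv i).exists h0
    have := M.smul_mem _ _ _ _ hh (hf i)
    rw [hm, add_comm]
    exact this

theorem regN_of_subsingleton (p : ℕ) (M : GMod k σ) (R : ℕ) (h : Subsingleton M.M) :
    RegN p M R := by
  induction p generalizing M R with
  | zero => exact h
  | succ p ih =>
    refine ⟨Empty, inferInstance, inferInstance, fun _ => 0, 0, fun i => i.elim,
      fun m => ⟨0, Subsingleton.elim _ _⟩, fun i => i.elim,
      fun D m _ => ⟨0, AddSubgroup.zero_mem _, Subsingleton.elim _ _⟩, ?_⟩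
    apply ih
    refine ⟨fun a b => Subtype.ext (funext fun i => i.elim)⟩

theorem regN_succ (p : ℕ) (M : GMod k σ) (R : ℕ) (h : RegN p M R) : RegN (p + 1) M R := by
  induction p generalizing M R with
  | zero => exact regN_of_subsingleton _ _ _ h
  | succ p ih =>
    obtain ⟨ι, h1, h2, deg, f, h3, h4, h5, h6, h7⟩ := h
    exact ⟨ι, h1, h2, deg, f, h3, h4, h5, h6, ih _ _ h7⟩

theorem regN_le {p q : ℕ} (hpq : p ≤ q) {M : GMod k σ} {R : ℕ} (h : RegN p M R) : RegN q M R := by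
  induction hpq with
  | refl => exact h
  | step _ ih => exact regN_succ _ _ _ ih

theorem regN_mono {p : ℕ} {M : GMod k σ} {R R' : ℕ} (hR : R ≤ R') (h : RegN p M R) :
    RegN p M R' := by
  induction p generalizing M R R' with
  | zero => exact h
  | succ p ih =>
    obtain ⟨ι, h1, h2, deg, f, h3, h4, h5, h6, h7⟩ := h
    exact ⟨ι, h1, h2, deg, f, fun i => (h3 i).trans hR, h4, h5, h6,
      ih (Nat.succ_le_succ hR) h7⟩

theorem horseshoeN (p : ℕ) {A B C : GMod k σ} {R : ℕ} (s : SES A B C) (hA : RegN p A R)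
    (hC : RegN p C R) : RegN p B R := by
  induction p generalizing A B C R with
  | zero =>
    have hA' : Subsingleton A.M := hA
    have hC' : Subsingleton C.M := hC
    refine ⟨fun x y => ?_⟩
    rw [← sub_eq_zero]
    obtain ⟨a, ha⟩ := s.ex (x - y) (Subsingleton.elim _ _)
    rw [← ha, Subsingleton.elim a 0, map_zero]
  | succ p ih =>
    obtain ⟨ι, h1, h2, deg, f, h3, h4, h5, h6, h7⟩ := hA
    obtain ⟨κ, g1, g2, deg', g, g3, g4, g5, g6, g7⟩ := hC
    choose b hb hqb using fun j => s.gl _ _ (g5 j)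
    let gB : (κ → MvPolynomial σ k) →ₗ[MvPolynomial σ k] B.M :=
      Fintype.linearCombination (MvPolynomial σ k) b
    have hgB : ∀ v, s.q (gB v) = g v := by
      intro v
      have : s.q ∘ₗ gB = g := by
        apply LinearMap.pi_ext'
        intro j
        ext
        simp [gB, hqb, Fintype.linearCombination_apply_single]
      rw [← this]; rfl
    let F : (ι ⊕ κ → MvPolynomial σ k) →ₗ[MvPolynomial σ k] B.M :=
      (s.i ∘ₗ f) ∘ₗ LinearMap.funLeft _ _ Sum.inl + gB ∘ₗ LinearMap.funLeft _ _ Sum.inr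
    have hF : ∀ v, F v = s.i (f (v ∘ Sum.inl)) + gB (v ∘ Sum.inr) := fun v => rfl
    have hFq : ∀ v, s.q (F v) = g (v ∘ Sum.inr) := by
      intro v
      rw [hF, map_add, s.qi, zero_add, hgB]
    have hFs : ∀ i, F (Pi.single i 1) ∈ B.gr (Sum.elim deg deg' i) := by
      rintro (i | j)
      · have e1 : (Pi.single (Sum.inl i) 1 : ι ⊕ κ → MvPolynomial σ k) ∘ Sum.inl = Pi.single i 1 := by
          ext x : 1; simp [Pi.single_apply]
        have e2 : (Pi.single (Sum.inl i) 1 : ι ⊕ κ → MvPolynomial σ k) ∘ Sum.inr = 0 := by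
          ext x : 1; simp
        rw [hF, e1, e2, map_zero, add_zero]
        exact (s.gi _ _).2 (h5 i)
      · have e1 : (Pi.single (Sum.inr j) 1 : ι ⊕ κ → MvPolynomial σ k) ∘ Sum.inr = Pi.single j 1 := by
          ext x : 1; simp [Pi.single_apply]
        have e2 : (Pi.single (Sum.inr j) 1 : ι ⊕ κ → MvPolynomial σ k) ∘ Sum.inl = 0 := by
          ext x : 1; simp
        rw [hF, e1, e2, map_zero, map_zero, zero_add]
        simpa [gB, Fintype.linearCombination_apply_single] using hb j
    have hgBgr : ∀ D, ∀ v : κ → MvPolynomial σ k, v ∈ (FreeG (k := k) (σ := σ) deg').gr D → gB v ∈ B.gr D := by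
      intro D v hv
      refine free_map_gr gB (fun j => ?_) D v hv
      simpa [gB, Fintype.linearCombination_apply_single] using hb j
    -- correction: lift the difference to `A`
    have corr : ∀ D, ∀ x ∈ B.gr D, ∀ v : κ → MvPolynomial σ k, v ∈ (FreeG (k := k) (σ := σ) deg').gr D → g v = s.q x →
        ∃ u : ι → MvPolynomial σ k, u ∈ (FreeG (k := k) (σ := σ) deg).gr D ∧ F (Sum.elim u v) = x := by
      intro D x hx v hv hgv
      obtain ⟨a, ha⟩ := s.ex (x - gB v) (by rw [map_sub, hgB, hgv, sub_self])
      have haD : a ∈ A.gr D := by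
        rw [← s.gi, ha]
        exact AddSubgroup.sub_mem _ hx (hgBgr D v hv)
      obtain ⟨u, hu, hfu⟩ := h6 D a haD
      refine ⟨u, hu, ?_⟩
      rw [hF]
      simp [Sum.elim_comp_inl, Sum.elim_comp_inr, hfu, ha]
    have corr' : ∀ x, ∀ v, g v = s.q x → ∃ u, F (Sum.elim u v) = x := by
      intro x v hgv
      obtain ⟨a, ha⟩ := s.ex (x - gB v) (by rw [map_sub, hgB, hgv, sub_self])
      obtain ⟨u, hfu⟩ := h4 a
      refine ⟨u, ?_⟩
      rw [hF]
      simp [Sum.elim_comp_inl, Sum.elim_comp_inr, hfu, ha]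
    have elimgr : ∀ D, ∀ u : ι → MvPolynomial σ k, ∀ v : κ → MvPolynomial σ k, u ∈ (FreeG (k := k) (σ := σ) deg).gr D →
        v ∈ (FreeG (k := k) (σ := σ) deg').gr D →
        (Sum.elim u v : ι ⊕ κ → MvPolynomial σ k) ∈ (FreeG (k := k) (σ := σ) (Sum.elim deg deg')).gr D := by
      intro D u v hu hv i
      rcases i with i | j
      · exact hu i
      · exact hv j
    refine ⟨ι ⊕ κ, inferInstance, inferInstance, Sum.elim deg deg', F, ?_, ?_, hFs, ?_, ?_⟩
    · rintro (i | j)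
      · exact h3 i
      · exact g3 j
    · intro x
      obtain ⟨v, hv⟩ := g4 (s.q x)
      obtain ⟨u, hu⟩ := corr' x v hv
      exact ⟨_, hu⟩
    · intro D x hx
      obtain ⟨v, hv, hgv⟩ := g6 D _ (s.gq D x hx)
      obtain ⟨u, hu, h⟩ := corr D x hx v hv hgv
      exact ⟨_, elimgr D u v hu hv, h⟩
    · let j1 : (ι → MvPolynomial σ k) →ₗ[MvPolynomial σ k] (ι ⊕ κ → MvPolynomial σ k) :=
        { toFun := fun u => Sum.elim u 0
          map_add' := fun u v => by ext (i | i) : 1 <;> simp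
          map_smul' := fun u v => by ext (i | i) : 1 <;> simp }
      have hj1 : ∀ u, F (j1 u) = s.i (f u) := by
        intro u
        rw [hF]
        simp [j1, Sum.elim_comp_inl, Sum.elim_comp_inr]
      let I1 : LinearMap.ker f →ₗ[MvPolynomial σ k] LinearMap.ker F :=
        (j1 ∘ₗ (LinearMap.ker f).subtype).codRestrict _ (fun u => by
          have : f u = 0 := u.2
          simp [LinearMap.mem_ker, hj1, this])
      let Q1 : LinearMap.ker F →ₗ[MvPolynomial σ k] LinearMap.ker g :=
        (LinearMap.funLeft _ _ Sum.inr ∘ₗ (LinearMap.ker F).subtype).codRestrict _ (fun u => by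
          have h0 : F u = 0 := u.2
          have := hFq u
          rw [h0, map_zero] at this
          exact this.symm)
      refine ih (A := SubG (FreeG deg) (LinearMap.ker f)) (C := SubG (FreeG deg') (LinearMap.ker g))
        (B := SubG (FreeG (Sum.elim deg deg')) (LinearMap.ker F))
        { i := I1, q := Q1, inj := ?_, surj := ?_, qi := ?_, ex := ?_, gi := ?_, gq := ?_, gl := ?_ } h7 g7
      · intro a b hab
        have := congrArg (fun x : LinearMap.ker F => (x : ι ⊕ κ → MvPolynomial σ k) ∘ Sum.inl) hab
        exact Subtype.ext this
      · rintro ⟨v, hv⟩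
        obtain ⟨u, hu⟩ := corr' 0 v (by rw [map_zero]; exact hv)
        exact ⟨⟨Sum.elim u v, hu⟩, Subtype.ext rfl⟩
      · intro a
        exact Subtype.ext rfl
      · rintro ⟨v, hv⟩ h0
        have h0' : v ∘ Sum.inr = 0 := congrArg Subtype.val h0
        have hv' : F v = 0 := hv
        rw [hF, h0', map_zero, add_zero] at hv'
        refine ⟨⟨v ∘ Sum.inl, ?_⟩, Subtype.ext ?_⟩
        · exact s.inj (by rw [hv', map_zero])
        · funext x
          rcases x with x | x
          · rfl
          · exact (congrFun h0' x).symm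
      · intro D a
        constructor
        · intro h i
          exact h (Sum.inl i)
        · intro h
          exact elimgr D _ _ h (AddSubgroup.zero_mem _)
      · intro D b hb j
        exact hb (Sum.inr j)
      · rintro D ⟨v, hv⟩ hvD
        obtain ⟨u, hu, h⟩ := corr D 0 (AddSubgroup.zero_mem _) v hvD (by rw [map_zero]; exact hv)
        exact ⟨⟨Sum.elim u v, h⟩, elimgr D u v hu hvD, Subtype.ext rfl⟩

/-- `M` has a finite graded free resolution with generators of the `i`-th
module in degrees at most `R + i`. -/
def Reg (M : GMod k σ) (R : ℕ) : Prop := ∃ p, RegN p M R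

theorem Reg.mono {M : GMod k σ} {R R' : ℕ} (h : Reg M R) (hR : R ≤ R') : Reg M R' :=
  let ⟨p, hp⟩ := h
  ⟨p, regN_mono hR hp⟩

theorem Reg.horseshoe {A B C : GMod k σ} {R : ℕ} (s : SES A B C) (hA : Reg A R)
    (hC : Reg C R) : Reg B R := by
  obtain ⟨p, hp⟩ := hA
  obtain ⟨q, hq⟩ := hC
  exact ⟨max p q, horseshoeN _ s (regN_le (le_max_left _ _) hp) (regN_le (le_max_right _ _) hq)⟩

theorem Reg.quot {A B C : GMod k σ} {R : ℕ} (s : SES A B C) (hA : Reg A (R + 1))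
    (hB : Reg B R) : Reg C R := by
  obtain ⟨p, hp⟩ := hB
  replace hp := regN_succ _ _ _ hp
  obtain ⟨ι, h1, h2, deg, f, h3, h4, h5, h6, h7⟩ := hp
  have hle : ∀ v : LinearMap.ker (s.q ∘ₗ f), f v ∈ LinearMap.range s.i := by
    intro v
    obtain ⟨a, ha⟩ := s.ex (f v) v.2
    exact ⟨a, ha⟩
  let I1 : LinearMap.ker f →ₗ[MvPolynomial σ k] LinearMap.ker (s.q ∘ₗ f) :=
    Submodule.inclusion (fun x hx => by
      have hx' : f x = 0 := hx
      simp [hx'])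
  let Q1 : LinearMap.ker (s.q ∘ₗ f) →ₗ[MvPolynomial σ k] A.M :=
    LinearMap.codRestrictOfInjective (f ∘ₗ (LinearMap.ker (s.q ∘ₗ f)).subtype) s.i s.inj hle
  have hQ1 : ∀ v, s.i (Q1 v) = f v := fun v =>
    LinearMap.codRestrictOfInjective_comp_apply _ _ _ _ v
  have key : Reg (SubG (FreeG deg) (LinearMap.ker (s.q ∘ₗ f))) (R + 1) := by
    refine Reg.horseshoe (A := SubG (FreeG deg) (LinearMap.ker f)) (C := A)
      { i := I1, q := Q1, inj := ?_, surj := ?_, qi := ?_, ex := ?_, gi := ?_, gq := ?_, gl := ?_ }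
      ⟨_, h7⟩ hA
    · intro a b hab
      have := congrArg (fun x : LinearMap.ker (s.q ∘ₗ f) => (x : ι → MvPolynomial σ k)) hab
      exact Subtype.ext this
    · intro a
      obtain ⟨v, hv⟩ := h4 (s.i a)
      refine ⟨⟨v, by simp [hv, s.qi]⟩, s.inj ?_⟩
      rw [hQ1]; exact hv
    · intro a
      apply s.inj
      rw [hQ1, map_zero]
      exact a.2
    · rintro ⟨b, hb'⟩ hb
      refine ⟨⟨b, ?_⟩, Subtype.ext rfl⟩
      have := hQ1 ⟨b, hb'⟩
      rw [hb, map_zero] at this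
      exact this.symm
    · intro D a
      exact Iff.rfl
    · intro D b hb
      rw [← s.gi, hQ1]
      exact free_map_gr f h5 D _ hb
    · intro D a ha
      obtain ⟨v, hv, hfv⟩ := h6 D _ ((s.gi D a).2 ha)
      refine ⟨⟨v, by simp [hfv, s.qi]⟩, hv, s.inj ?_⟩
      rw [hQ1]; exact hfv
  obtain ⟨q, hq⟩ := key
  refine ⟨q + 1, ι, h1, h2, deg, s.q ∘ₗ f, h3, s.surj.comp h4, fun i => s.gq _ _ (h5 i), ?_, hq⟩
  intro D m hm
  obtain ⟨b, hb, rfl⟩ := s.gl D m hm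
  obtain ⟨v, hv, rfl⟩ := h6 D b hb
  exact ⟨v, hv, rfl⟩

end Framework

section MonIdeals

variable {k : Type} [Field k] {σ : Type}

theorem regN_shift (d : ℕ) (p : ℕ) {M M' : GMod k σ} {R : ℕ}
    (φ : M.M ≃ₗ[MvPolynomial σ k] M'.M) (h1 : ∀ D m, m ∈ M.gr D → φ m ∈ M'.gr (D + d))
    (h2 : ∀ D' m, φ m ∈ M'.gr D' → m = 0 ∨ ∃ D, D' = D + d ∧ m ∈ M.gr D)
    (h : RegN p M R) : RegN p M' (R + d) := by
  induction p generalizing M M' R with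
  | zero =>
    have h' : Subsingleton M.M := h
    exact φ.symm.toEquiv.subsingleton
  | succ p ih =>
    obtain ⟨ι, i1, i2, deg, f, f3, f4, f5, f6, f7⟩ := h
    have hk : LinearMap.ker f = LinearMap.ker (φ.toLinearMap ∘ₗ f) := by
      ext x; simp [LinearMap.mem_ker]
    have key : ∀ D, ∀ v : ι → MvPolynomial σ k, v ∈ (FreeG (k := k) (σ := σ) deg).gr D →
        v ∈ (FreeG (k := k) (σ := σ) (fun i => deg i + d)).gr (D + d) := by
      intro D v hv i a ha
      have := hv i a ha
      show _ + (deg i + d) = _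
      omega
    have key2 : ∀ D', ∀ v : ι → MvPolynomial σ k,
        v ∈ (FreeG (k := k) (σ := σ) (fun i => deg i + d)).gr D' → v = 0 ∨ ∃ D, D' = D + d ∧
        v ∈ (FreeG (k := k) (σ := σ) deg).gr D := by
      intro D' v hv
      by_cases h0 : v = 0
      · exact Or.inl h0
      · right
        obtain ⟨i, hi⟩ := Function.ne_iff.1 h0
        obtain ⟨a, ha⟩ := MvPolynomial.ne_zero_iff.1 hi
        have h1 : a.degree + (deg i + d) = D' := hv i a ha
        refine ⟨a.degree + deg i, by omega, fun j b hb => ?_⟩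
        have h2 : b.degree + (deg j + d) = D' := hv j b hb
        omega
    refine ⟨ι, i1, i2, fun i => deg i + d, φ.toLinearMap ∘ₗ f, fun i => ?_, φ.surjective.comp f4,
      fun i => h1 _ _ (f5 i), ?_, ?_⟩
    · exact Nat.add_le_add_right (f3 i) d
    · intro D' m' hm'
      rcases h2 D' (φ.symm m') (by simpa using hm') with h0 | ⟨D, rfl, hD⟩
      · refine ⟨0, AddSubgroup.zero_mem _, ?_⟩
        have : m' = 0 := by simpa using h0
        rw [this, map_zero]
      · obtain ⟨v, hv, hfv⟩ := f6 D _ hD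
        exact ⟨v, key D v hv, by simp [hfv]⟩
    · have := ih (M' := SubG (FreeG fun i => deg i + d) (LinearMap.ker (φ.toLinearMap ∘ₗ f)))
        (LinearEquiv.ofEq _ _ hk) (fun D m hm => key D _ hm) (fun D' m hm => ?_) f7
      · rwa [Nat.add_right_comm] at this
      · rcases key2 D' m.1 hm with h | h
        · exact Or.inl (Subtype.ext h)
        · exact Or.inr h

theorem reg_ideal_shift (d : ℕ) {J : Ideal (MvPolynomial σ k)} {R R' : ℕ}
    (h : Reg (IdealG J 0) R) (hR : R + d ≤ R') : Reg (IdealG J d) R' := by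
  obtain ⟨p, hp⟩ := h
  refine Reg.mono ⟨p, regN_shift d p (M := IdealG J 0) (M' := IdealG J d) (LinearEquiv.refl _ _) ?_ ?_ hp⟩ hR
  · intro D m hm a ha
    have h1 : a.degree + 0 = D := hm a ha
    omega
  · intro D' m hm
    by_cases h0 : m = 0
    · exact Or.inl h0
    · right
      obtain ⟨a, ha⟩ := MvPolynomial.ne_zero_iff.1 (fun h => h0 (Subtype.ext h) : (m : MvPolynomial σ k) ≠ 0)
      have h1 : a.degree + d = D' := hm a ha
      refine ⟨a.degree, by omega, fun b hb => ?_⟩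
      have h2 := hm b hb
      have h3 : b.degree + d = D' := h2
      omega

theorem reg_top : Reg (IdealG (⊤ : Ideal (MvPolynomial σ k)) 0) 0 := by
  refine ⟨1, Unit, inferInstance, inferInstance, fun _ => 0,
    (Submodule.topEquiv.symm.toLinearMap ∘ₗ LinearMap.proj ()), fun _ => le_rfl, ?_, ?_, ?_, ?_⟩
  · rintro ⟨x, hx⟩
    exact ⟨fun _ => x, rfl⟩
  · intro i
    show Hm 0 ((Pi.single () 1 : Unit → MvPolynomial σ k) ()) 0
    rw [Pi.single_eq_same]
    exact Hm.of_isHomogeneous (isHomogeneous_one _ _)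
  · rintro D ⟨m, hm'⟩ hm
    exact ⟨fun _ => m, fun _ => hm, rfl⟩
  · refine ⟨fun a b => Subtype.ext (funext fun i => ?_)⟩
    have ha := congrArg Subtype.val a.2
    have hb := congrArg Subtype.val b.2
    exact Eq.trans ha (Eq.symm hb)

/-- The monomial ideal of an upper set of exponents. -/
def MI (U : UpperSet (σ →₀ ℕ)) : Ideal (MvPolynomial σ k) where
  carrier := {p | ∀ a, coeff a p ≠ 0 → a ∈ U}
  zero_mem' := by intro a h; simp at h
  add_mem' := by
    intro p q hp hq a h
    by_cases h1 : coeff a p = 0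
    · by_cases h2 : coeff a q = 0
      · simp [h1, h2] at h
      · exact hq a h2
    · exact hp a h1
  smul_mem' := by
    classical
    intro p q hq a h
    rw [smul_eq_mul, coeff_mul] at h
    obtain ⟨⟨x, y⟩, hxy, hne⟩ := Finset.exists_ne_zero_of_sum_ne_zero h
    have hy : coeff y q ≠ 0 := right_ne_zero_of_mul hne
    have hxy' : x + y = a := by simpa using hxy
    exact U.upper (by rw [← hxy']; exact le_add_self) (hq y hy)

theorem mem_MI {U : UpperSet (σ →₀ ℕ)} {p : MvPolynomial σ k} :
    p ∈ MI U ↔ ∀ a, coeff a p ≠ 0 → a ∈ U := Iff.rfl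

/-- Colon. -/
def colU (U : UpperSet (σ →₀ ℕ)) (m : σ →₀ ℕ) : UpperSet (σ →₀ ℕ) where
  carrier := {a | a + m ∈ U}
  upper' := fun _ _ hab ha => U.upper (add_le_add_left hab m) ha

/-- Adding a monomial. -/
def addU (U : UpperSet (σ →₀ ℕ)) (m : σ →₀ ℕ) : UpperSet (σ →₀ ℕ) where
  carrier := {a | a ∈ U ∨ m ≤ a}
  upper' := fun _ _ hab ha => ha.imp (fun h => U.upper hab h) (fun h => h.trans hab)

theorem mem_colU {U : UpperSet (σ →₀ ℕ)} {m a : σ →₀ ℕ} : a ∈ colU U m ↔ a + m ∈ U := Iff.rfl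
theorem mem_addU {U : UpperSet (σ →₀ ℕ)} {m a : σ →₀ ℕ} : a ∈ addU U m ↔ a ∈ U ∨ m ≤ a := Iff.rfl

/-- Split sequence. -/
def sesProd (A B : GMod k σ) : SES B (ProdG A B) A where
  i := LinearMap.inr _ _ _
  q := LinearMap.fst _ _ _
  inj := LinearMap.inr_injective
  surj := LinearMap.fst_surjective
  qi := fun a => rfl
  ex := fun b hb => ⟨b.2, Prod.ext hb.symm rfl⟩
  gi := fun D a => ⟨fun h => h.2, fun h => ⟨AddSubgroup.zero_mem _, h⟩⟩
  gq := fun D b hb => hb.1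
  gl := fun D c hc => ⟨(c, 0), ⟨hc, AddSubgroup.zero_mem _⟩, rfl⟩

theorem Hm_monomial (m : σ →₀ ℕ) : Hm 0 (monomial m (1 : k)) m.degree := by
  classical
  intro a ha
  rw [coeff_monomial] at ha
  split_ifs at ha with h
  · rw [h]; rfl
  · exact absurd rfl ha

theorem decomp (U : UpperSet (σ →₀ ℕ)) (m : σ →₀ ℕ) (c : MvPolynomial σ k) (hc : c ∈ MI (addU U m)) :
    ∃ (x : MvPolynomial σ k), ∃ y, x ∈ MI U ∧ c = x + y * monomial m 1 ∧
      ∀ D, Hm 0 c D → Hm 0 x D ∧ Hm m.degree y D := by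
  classical
  refine ⟨c.modMonomial m, c.divMonomial m, ?_, ?_, ?_⟩
  · intro a ha
    have hn : ¬ m ≤ a := fun h => ha (coeff_modMonomial_of_le _ h)
    rw [coeff_modMonomial_of_not_le _ hn] at ha
    exact (hc a ha).resolve_right hn
  · rw [add_comm, mul_comm]
    exact (divMonomial_add_modMonomial c m).symm
  · intro D hD
    constructor
    · intro a ha
      have hn : ¬ m ≤ a := fun h => ha (coeff_modMonomial_of_le _ h)
      rw [coeff_modMonomial_of_not_le _ hn] at ha
      exact hD a ha
    · intro a ha
      rw [coeff_divMonomial] at ha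
      have := hD _ ha
      rw [map_add] at this
      omega

theorem mul_mon_mem {U : UpperSet (σ →₀ ℕ)} {m : σ →₀ ℕ} {p : MvPolynomial σ k} :
    p * monomial m 1 ∈ MI U ↔ p ∈ MI (colU U m) := by
  classical
  constructor
  · intro h a ha
    apply h
    rw [coeff_mul_monomial]
    simpa using ha
  · intro h a ha
    rw [coeff_mul_monomial'] at ha
    split_ifs at ha with hm
    · have := h (a - m) (by simpa using ha)
      rw [mem_colU, tsub_add_cancel_of_le hm] at this
      exact this
    · exact absurd rfl ha

/-- The basic short exact sequence. -/
def sesMain (U : UpperSet (σ →₀ ℕ)) (m : σ →₀ ℕ) :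
    SES (IdealG (MI (k := k) (colU U m)) m.degree)
      (ProdG (IdealG (MI (k := k) U) 0) (IdealG (⊤ : Ideal (MvPolynomial σ k)) m.degree))
      (IdealG (MI (k := k) (addU U m)) 0) where
  i := 
    { toFun := fun p => (⟨p.1 * monomial m 1, mul_mon_mem.2 p.2⟩, ⟨-p.1, trivial⟩)
      map_add' := fun p q => Prod.ext (Subtype.ext (add_mul _ _ _)) (Subtype.ext (neg_add _ _))
      map_smul' := fun p q => Prod.ext (Subtype.ext (mul_assoc _ _ _)) (Subtype.ext (mul_neg _ _).symm) }
  q := 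
    { toFun := fun p => ⟨p.1.1 + p.2.1 * monomial m 1, Submodule.add_mem _
        (fun a ha => Or.inl (p.1.2 a ha))
        (mul_mon_mem.2 fun a ha => Or.inr le_add_self)⟩
      map_add' := fun p q => Subtype.ext (by
        show p.1.1 + q.1.1 + (p.2.1 + q.2.1) * _ = (p.1.1 + p.2.1 * _) + (q.1.1 + q.2.1 * _)
        ring)
      map_smul' := fun r q => Subtype.ext (by
        show r * q.1.1 + (r * q.2.1) * _ = r * (q.1.1 + q.2.1 * _)
        ring) }
  inj := by
    intro p q h
    have h2 : -p.1 = -q.1 := congrArg Subtype.val (congrArg Prod.snd h)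
    exact Subtype.ext (neg_injective h2)
  surj := by
    rintro ⟨c, hc⟩
    obtain ⟨x, y, hx, h, -⟩ := decomp U m c hc
    exact ⟨(⟨x, hx⟩, ⟨y, trivial⟩), Subtype.ext h.symm⟩
  qi := fun p => Subtype.ext (by
    show p.1 * monomial m 1 + -p.1 * monomial m 1 = 0
    ring)
  ex := by
    rintro ⟨⟨x, hx⟩, ⟨y, hy⟩⟩ h
    have h' : x + y * monomial m 1 = 0 := congrArg Subtype.val h
    have h2 : x = -y * monomial m 1 := by linear_combination h'
    refine ⟨⟨-y, mul_mon_mem.1 (h2 ▸ hx)⟩, Prod.ext (Subtype.ext h2.symm) (Subtype.ext (neg_neg y))⟩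
  gi := by
    intro D a
    constructor
    · intro h
      have := Hm.neg h.2
      intro b hb
      apply this b
      show coeff b (- -a.1) ≠ 0
      rwa [neg_neg]
    · intro h
      refine ⟨?_, Hm.neg h⟩
      intro b hb
      have hb' : coeff b (a.1 * monomial m 1) ≠ 0 := hb
      classical
      rw [coeff_mul_monomial'] at hb'
      split_ifs at hb' with hm
      · have := h (b - m) (by simpa using hb')
        rw [← map_add, tsub_add_cancel_of_le hm] at this
        exact this
      · exact absurd rfl hb'
  gq := by
    intro D b hb
    refine Hm.add hb.1 ?_
    intro c hc
    have hc' : coeff c (b.2.1 * monomial m 1) ≠ 0 := hc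
    classical
    rw [coeff_mul_monomial'] at hc'
    split_ifs at hc' with hm
    · have := hb.2 (c - m) (by simpa using hc')
      rw [← map_add, tsub_add_cancel_of_le hm] at this
      exact this
    · exact absurd rfl hc'
  gl := by
    rintro D ⟨c, hc⟩ hD
    obtain ⟨x, y, hx, h, hh⟩ := decomp U m c hc
    obtain ⟨h1, h2⟩ := hh D hD
    exact ⟨(⟨x, hx⟩, ⟨y, trivial⟩), ⟨h1, h2⟩, Subtype.ext h.symm⟩

variable (k) in
/-- Regularity bound for the monomial ideal of `U`. -/
def RU (U : UpperSet (σ →₀ ℕ)) (R : ℕ) : Prop := Reg (IdealG (MI (k := k) U) 0) R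

theorem RU.mono {U : UpperSet (σ →₀ ℕ)} {R R' : ℕ} (h : RU k U R) (hR : R ≤ R') : RU k U R' :=
  Reg.mono h hR

theorem RU.L1 {U : UpperSet (σ →₀ ℕ)} (m : σ →₀ ℕ) {R R1 : ℕ} (h1 : RU k (colU U m) R1)
    (h2 : RU k (addU U m) R) (hR : R1 + m.degree ≤ R) : RU k U R := by
  have h3 := Reg.horseshoe (sesMain (k := k) U m) (reg_ideal_shift m.degree h1 hR) h2
  exact Reg.quot (sesProd _ _) (reg_ideal_shift m.degree reg_top (by omega)) h3

theorem RU.L2 {U : UpperSet (σ →₀ ℕ)} (m : σ →₀ ℕ) {R R1 : ℕ} (h1 : RU k (colU U m) R1)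
    (h2 : RU k U R) (hR : R1 + m.degree ≤ R + 1) (hd : m.degree ≤ R) : RU k (addU U m) R := by
  have h3 := Reg.horseshoe (sesProd (IdealG (MI (k := k) U) 0) (IdealG ⊤ m.degree))
    (reg_ideal_shift m.degree reg_top (by omega)) h2
  exact Reg.quot (sesMain (k := k) U m) (reg_ideal_shift m.degree h1 hR) h3

theorem RU.full {U : UpperSet (σ →₀ ℕ)} (h : 0 ∈ U) (R : ℕ) : RU k U R := by
  have : MI (k := k) U = ⊤ := by
    rw [eq_top_iff]
    intro p _ a _
    exact U.upper (zero_le) h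
  unfold RU
  rw [this]
  exact reg_top.mono (Nat.zero_le _)

theorem RU.empty {U : UpperSet (σ →₀ ℕ)} (h : ∀ a, a ∉ U) (R : ℕ) : RU k U R := by
  refine ⟨0, ⟨fun a b => Subtype.ext ?_⟩⟩
  have : ∀ p : MvPolynomial σ k, p ∈ MI U → p = 0 := by
    intro p hp
    ext a
    by_contra hne
    exact h a (hp a hne)
  rw [this a a.2, this b b.2]

theorem RU.congr {U V : UpperSet (σ →₀ ℕ)} (h : ∀ a, a ∈ U ↔ a ∈ V) {R : ℕ} (hU : RU k U R) :
    RU k V R := by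
  have : U = V := SetLike.ext h
  exact this ▸ hU

end MonIdeals

section GoodIdeals

variable {k : Type} [Field k] {σ : Type} [Fintype σ] [DecidableEq σ]

/-- Exponents bounded by `w` with at most one tight entry. -/
def Good (w : σ → ℕ) (b : σ →₀ ℕ) : Prop :=
  (∀ p, b p ≤ w p) ∧ ∀ p q, b p = w p → b q = w q → p = q

/-- `U` is generated by good exponents. -/
def GoodU (w : σ → ℕ) (U : UpperSet (σ →₀ ℕ)) : Prop :=
  ∀ b ∈ U, ∃ b' ∈ U, b' ≤ b ∧ Good w b'

theorem Good.anti {w : σ → ℕ} {b b' : σ →₀ ℕ} (h : Good w b) (hb : b' ≤ b) : Good w b' := by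
  have key : ∀ p, b' p = w p → b p = w p := fun p hp => le_antisymm (h.1 p) (hp ▸ hb p)
  exact ⟨fun p => (hb p).trans (h.1 p), fun p q hp hq => h.2 p q (key p hp) (key q hq)⟩

/-- Transfer of goodness when tightness is only created at tight places. -/
theorem Good.transfer {w w' : σ → ℕ} {b b' : σ →₀ ℕ} (h : Good w b)
    (hb : ∀ p, b' p < w' p ∨ (b' p = w' p ∧ b p = w p)) : Good w' b' := by
  refine ⟨fun p => ?_, fun p q hp hq => h.2 p q ?_ ?_⟩
  · rcases hb p with h | h <;> omega
  · rcases hb p with h | h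
    · omega
    · exact h.2
  · rcases hb q with h | h
    · omega
    · exact h.2

theorem Good.of_le_single {w : σ → ℕ} (p : σ) {b : σ →₀ ℕ} (hp : b p ≤ w p)
    (hb : ∀ q, q ≠ p → b q < w q) : Good w b := by
  have key : ∀ q, b q = w q → q = p := by
    intro q hq
    by_contra hne
    have := hb q hne
    omega
  refine ⟨fun q => ?_, fun q r hq hr => (key q hq).trans (key r hr).symm⟩
  by_cases h : q = p
  · exact h ▸ hp
  · exact (hb q h).le

/-- Ideal generated by the variables in `T`. -/
def varU (T : Finset σ) : UpperSet (σ →₀ ℕ) where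
  carrier := {a | ∃ p ∈ T, 1 ≤ a p}
  upper' := fun _ _ hab ⟨p, hp, h⟩ => ⟨p, hp, h.trans (hab p)⟩

theorem mem_varU {T : Finset σ} {a : σ →₀ ℕ} : a ∈ varU T ↔ ∃ p ∈ T, 1 ≤ a p := Iff.rfl

theorem varU_reg (T : Finset σ) : RU k (varU T) 1 := by
  induction T using Finset.induction_on with
  | empty => exact RU.empty (fun a ha => by obtain ⟨p, hp, -⟩ := ha; simp at hp) 1
  | insert p T hp ih =>
    have h1 : RU k (colU (varU T) (Finsupp.single p 1)) 1 := by
      refine RU.congr (fun a => ?_) ih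
      rw [mem_colU, mem_varU, mem_varU]
      refine exists_congr fun q => and_congr_right fun hq => ?_
      have : p ≠ q := fun h => hp (h ▸ hq)
      simp [Finsupp.single_apply, this]
    have h2 := RU.L2 (Finsupp.single p 1) h1 ih (by simp) (by simp)
    refine RU.congr (fun a => ?_) h2
    rw [mem_addU, mem_varU, mem_varU]
    simp only [Finset.mem_insert, exists_eq_or_imp, Finsupp.single_le_iff]
    exact or_comm

theorem sum_update (w : σ → ℕ) (p : σ) (v : ℕ) :
    ∑ q, (Function.update w p v q - 1) + (w p - 1) = ∑ q, (w q - 1) + (v - 1) := by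
  rw [← Finset.add_sum_erase _ _ (Finset.mem_univ p),
    ← Finset.add_sum_erase _ (fun q => w q - 1) (Finset.mem_univ p)]
  have : ∑ x ∈ Finset.univ.erase p, (Function.update w p v x - 1) = ∑ x ∈ Finset.univ.erase p, (w x - 1) := by
    refine Finset.sum_congr rfl fun x hx => ?_
    rw [Function.update_of_ne (Finset.ne_of_mem_erase hx)]
  rw [this, Function.update_self]
  omega

theorem good_reg (N : ℕ) (w : σ → ℕ) (hw : ∀ p, 1 ≤ w p) (U : UpperSet (σ →₀ ℕ)) (hU : GoodU w U)
    (hN : ∑ p, (w p - 1) = N) : RU k U (N + 1) := by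
  induction N using Nat.strong_induction_on generalizing w U with
  | _ N ih =>
  by_cases hex : ∃ p, 2 ≤ w p
  · obtain ⟨p, hp⟩ := hex
    have s1 := sum_update w p (w p - 1)
    have s2 := sum_update w p 1
    have c1 : RU k (colU U (Finsupp.single p 1)) (∑ q, (Function.update w p (w p - 1) q - 1) + 1) := by
      refine ih _ (by omega) (Function.update w p (w p - 1)) ?_ _ ?_ rfl
      · intro q
        by_cases hq : q = p
        · subst hq; rw [Function.update_self]; omega
        · rw [Function.update_of_ne hq]; exact hw q
      · intro b hb
        obtain ⟨b', hb', hle, hg⟩ := hU _ hb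
        refine ⟨b' - Finsupp.single p 1, ?_, ?_, ?_⟩
        · rw [mem_colU]
          exact U.upper le_tsub_add hb'
        · exact tsub_le_iff_right.2 hle
        · refine hg.transfer fun q => ?_
          have := hg.1 q
          by_cases hq : q = p
          · subst hq
            rw [Function.update_self, Finsupp.tsub_apply, Finsupp.single_eq_same]
            omega
          · rw [Function.update_of_ne hq, Finsupp.tsub_apply, Finsupp.single_eq_of_ne hq]
            omega
    have c2 : RU k (addU U (Finsupp.single p 1)) (∑ q, (Function.update w p 1 q - 1) + 1) := by
      have hsing : Good (Function.update w p 1) (Finsupp.single p 1) := by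
        refine Good.of_le_single p (by simp) fun q hq => ?_
        rw [Function.update_of_ne hq, Finsupp.single_eq_of_ne hq]
        exact hw q
      refine ih _ (by omega) (Function.update w p 1) ?_ _ ?_ rfl
      · intro q
        by_cases hq : q = p
        · subst hq; rw [Function.update_self]
        · rw [Function.update_of_ne hq]; exact hw q
      · intro b hb
        rcases hb with hb | hb
        · obtain ⟨b', hb', hle, hg⟩ := hU _ hb
          by_cases h0 : b' p = 0
          · refine ⟨b', Or.inl hb', hle, hg.transfer fun q => ?_⟩
            have := hg.1 q
            by_cases hq : q = p
            · subst hq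
              rw [Function.update_self]
              omega
            · rw [Function.update_of_ne hq]
              omega
          · refine ⟨Finsupp.single p 1, Or.inr le_rfl, ?_, hsing⟩
            rw [Finsupp.single_le_iff]
            have := hle p
            omega
        · exact ⟨Finsupp.single p 1, Or.inr le_rfl, hb, hsing⟩
    refine RU.L1 _ c1 (c2.mono (by omega)) ?_
    rw [Finsupp.degree_single]
    omega
  · have hw1 : ∀ p, w p = 1 := by
      intro p
      by_contra hne
      have := hw p
      exact hex ⟨p, by omega⟩
    by_cases h0 : 0 ∈ U
    · exact RU.full h0 _
    · classical
      refine RU.mono (RU.congr (fun a => ?_) (varU_reg (Finset.univ.filter fun p => Finsupp.single p 1 ∈ U)))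
        (by omega : 1 ≤ N + 1)
      rw [mem_varU]
      constructor
      · rintro ⟨p, hp, hle⟩
        rw [Finset.mem_filter] at hp
        exact U.upper (Finsupp.single_le_iff.2 hle) hp.2
      · intro ha
        obtain ⟨b, hb, hle, hg⟩ := hU a ha
        have hb0 : b ≠ 0 := fun h => h0 (h ▸ hb)
        obtain ⟨p, hp⟩ := Finsupp.ne_iff.1 hb0
        have hp' : b p ≠ 0 := hp
        have h1 := hg.1 p
        rw [hw1] at h1
        refine ⟨p, ?_, ?_⟩
        · rw [Finset.mem_filter]
          refine ⟨Finset.mem_univ _, ?_⟩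
          have : b = Finsupp.single p 1 := by
            ext q
            by_cases hq : q = p
            · subst hq; rw [Finsupp.single_eq_same]; omega
            · rw [Finsupp.single_eq_of_ne hq]
              have h2 := hg.1 q
              rw [hw1] at h2
              by_contra hne
              exact hq (hg.2 q p (by rw [hw1]; omega) (by rw [hw1]; omega))
          exact this ▸ hb
        · have := hle p
          omega

end GoodIdeals

section Comb

variable {n : ℕ} [NeZero n]

theorem fin_one_ne (hn : 3 ≤ n) : (1 : Fin n) ≠ 0 := by
  obtain ⟨m, rfl⟩ : ∃ m, n = m + 3 := ⟨n - 3, by omega⟩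
  simp

theorem fin_two_ne (hn : 3 ≤ n) : (1 + 1 : Fin n) ≠ 0 := by
  obtain ⟨m, rfl⟩ : ∃ m, n = m + 3 := ⟨n - 3, by omega⟩
  intro h
  have := congrArg Fin.val h
  rw [Fin.val_add] at this
  simp only [Fin.val_one, Fin.val_zero] at this
  rw [Nat.mod_eq_of_lt (by omega)] at this
  omega

theorem fin_ne1 (hn : 3 ≤ n) (p : Fin n) : p + 1 ≠ p := by
  intro h
  exact fin_one_ne hn (by simpa using h)

theorem fin_ne1' (hn : 3 ≤ n) (p : Fin n) : p - 1 ≠ p := by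
  intro h
  exact fin_one_ne hn (by simpa using h)

theorem fin_ne2 (hn : 3 ≤ n) (p : Fin n) : p + 1 ≠ p - 1 := by
  intro h
  apply fin_two_ne hn
  have h2 : p + (1 + 1) = p := by
    rw [← add_assoc, h, sub_add_cancel]
  simpa using h2

theorem fin_pred_lt (p : Fin n) (hp : p ≠ 0) : p - 1 < p := by
  obtain ⟨m, rfl⟩ : ∃ m, n = m + 1 := ⟨n - 1, by have := NeZero.ne n; omega⟩
  rw [Fin.sub_one_lt_iff]
  exact Fin.pos_of_ne_zero hp

/-- Exponent of `L^c`. -/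
def EE (w c : Fin n → ℕ) : Fin n →₀ ℕ :=
  Finsupp.equivFunOnFinite.symm fun p => w p * c p + c (p + 1)

@[simp] theorem EE_apply (w c : Fin n → ℕ) (p : Fin n) : EE w c p = w p * c p + c (p + 1) := rfl

/-- The exponents of the power `I^t`. -/
def powU (w : Fin n → ℕ) (t : ℕ) : UpperSet (Fin n →₀ ℕ) where
  carrier := {a | ∃ c : Fin n → ℕ, ∑ p, c p = t ∧ EE w c ≤ a}
  upper' := fun _ _ hab ⟨c, hc, h⟩ => ⟨c, hc, h.trans hab⟩

theorem mem_powU {w : Fin n → ℕ} {t : ℕ} {a : Fin n →₀ ℕ} :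
    a ∈ powU w t ↔ ∃ c : Fin n → ℕ, ∑ p, c p = t ∧ EE w c ≤ a := Iff.rfl

/-- The colon ideals in the chain. -/
def QU (w : Fin n → ℕ) (t : ℕ) (c : Fin n → ℕ) : UpperSet (Fin n →₀ ℕ) where
  carrier := {b | ∃ c' : Fin n → ℕ, (∑ p, c' p = t + 1 ∨ (∑ p, c' p = t ∧ toLex c' < toLex c)) ∧
    EE w c' ≤ b + EE w c}
  upper' := fun _ _ hab ⟨c', hc, h⟩ => ⟨c', hc, h.trans (add_le_add_left hab _)⟩

theorem mem_QU {w : Fin n → ℕ} {t : ℕ} {c : Fin n → ℕ} {b : Fin n →₀ ℕ} :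
    b ∈ QU w t c ↔ ∃ c' : Fin n → ℕ,
      (∑ p, c' p = t + 1 ∨ (∑ p, c' p = t ∧ toLex c' < toLex c)) ∧
      EE w c' ≤ b + EE w c := Iff.rfl

variable {w : Fin n → ℕ} {t : ℕ} {c : Fin n → ℕ}

theorem QU_of_delta (hc : ∑ p, c p = t) (δ : Fin n → ℤ) (h0 : ∀ p, 0 ≤ c p + δ p)
    (hs : ∑ p, δ p = 1 ∨ (∑ p, δ p = 0 ∧ ∃ i, (∀ j < i, δ j = 0) ∧ δ i < 0))
    {b : Fin n →₀ ℕ} (hb : ∀ p, w p * δ p + δ (p + 1) ≤ b p) : b ∈ QU w t c := by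
  have e : ∀ p, (((c p + δ p).toNat : ℕ) : ℤ) = c p + δ p := fun p => Int.toNat_of_nonneg (h0 p)
  have hsum : ((∑ p, (c p + δ p).toNat : ℕ) : ℤ) = t + ∑ p, δ p := by
    push_cast [e]
    rw [Finset.sum_add_distrib, ← hc]
    push_cast
    rfl
  refine ⟨fun p => (c p + δ p).toNat, ?_, ?_⟩
  · show ∑ p, (c p + δ p).toNat = t + 1 ∨ (∑ p, (c p + δ p).toNat = t ∧ _)
    rcases hs with h | ⟨h, i, hj, hi⟩
    · left; omega
    · right
      refine ⟨by omega, ?_⟩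
      refine ⟨i, fun j hji => ?_, ?_⟩
      · show (c j + δ j).toNat = c j
        have := hj j hji
        omega
      · show (c i + δ i).toNat < c i
        have := h0 i
        omega
  · intro p
    rw [Finsupp.add_apply, EE_apply, EE_apply]
    zify
    rw [e, e]
    have := hb p
    linarith

theorem QU_L (hn : 3 ≤ n) (hc : ∑ p, c p = t) (p : Fin n) {b : Fin n →₀ ℕ} (h1 : 1 ≤ b (p - 1))
    (h2 : w p ≤ b p) : b ∈ QU w t c := by
  refine QU_of_delta hc (Pi.single p 1) (fun q => ?_) (Or.inl (by simp)) (fun q => ?_)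
  · by_cases h : q = p
    · subst h; rw [Pi.single_eq_same]; omega
    · rw [Pi.single_eq_of_ne h]; omega
  · by_cases hq : q = p
    · subst hq
      rw [Pi.single_eq_same, Pi.single_eq_of_ne (fin_ne1 hn q)]
      omega
    · rw [Pi.single_eq_of_ne hq]
      by_cases hq' : q + 1 = p
      · have : q = p - 1 := eq_sub_of_add_eq hq'
        rw [hq', Pi.single_eq_same, this]
        omega
      · rw [Pi.single_eq_of_ne hq']
        omega

theorem QU_pow (hn : 3 ≤ n) (hw : ∀ i, 2 ≤ w i) (hc : ∑ p, c p = t) (p : Fin n) (hp : p ≠ 0)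
    (hcp : 1 ≤ c (p - 1)) {b : Fin n →₀ ℕ} (h2 : w p ≤ b p) : b ∈ QU w t c := by
  have hne := fin_ne1' hn p
  have hne1 := fin_ne1 hn p
  have hne2 := fin_ne2 hn p
  refine QU_of_delta hc (Pi.single p 1 - Pi.single (p - 1) 1) (fun q => ?_) (Or.inr ⟨by simp, ?_⟩)
    (fun q => ?_)
  · simp only [Pi.sub_apply, Pi.single_apply]
    split_ifs with h1 h2 h2 <;> try omega
    subst h2; omega
  · refine ⟨p - 1, fun j hj => ?_, ?_⟩
    · have := fin_pred_lt p hp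
      simp only [Pi.sub_apply, Pi.single_apply]
      rw [if_neg hj.ne, if_neg (hj.trans this).ne]
      rfl
    · simp [hne]
  · have hwq := hw q
    simp only [Pi.sub_apply, Pi.single_apply]
    by_cases hq : q = p
    · subst hq
      rw [if_pos rfl, if_neg hne.symm, if_neg hne1, if_neg hne2]
      omega
    · rw [if_neg hq]
      by_cases hq' : q + 1 = p
      · have : q = p - 1 := eq_sub_of_add_eq hq'
        rw [if_pos this, if_pos hq', if_neg (by rw [hq']; exact hne.symm)]
        omega
      · rw [if_neg hq', if_neg (fun h => hq' (by rw [h, sub_add_cancel]))]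
        split_ifs <;> omega

theorem fin_m1 : (-1 : Fin n) + 1 = 0 := neg_add_cancel 1

theorem QU_sq (hn : 3 ≤ n) (hw : ∀ i, 2 ≤ w i) (hc : ∑ p, c p = t)
    (hcp : 1 ≤ c (-1)) {b : Fin n →₀ ℕ} (h2 : 2 * w 0 ≤ b 0) : b ∈ QU w t c := by
  have hne : (0 : Fin n) ≠ -1 := fun h => fin_ne1' hn 0 (by rw [zero_sub]; exact h.symm)
  have hne1 : (0 : Fin n) + 1 ≠ 0 := fin_ne1 hn 0
  have hne2 : (0 : Fin n) + 1 ≠ -1 := by have := fin_ne2 hn 0; rwa [zero_sub] at this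
  refine QU_of_delta hc (Pi.single 0 2 - Pi.single (-1) 1) (fun q => ?_) (Or.inl (by simp))
    (fun q => ?_)
  · simp only [Pi.sub_apply, Pi.single_apply]
    split_ifs with h1 h2 h2 <;> try omega
    subst h2; omega
  · have hwq := hw q
    simp only [Pi.sub_apply, Pi.single_apply]
    by_cases hq : q = 0
    · subst hq
      rw [if_pos rfl, if_neg hne, if_neg hne1, if_neg hne2]
      omega
    · rw [if_neg hq]
      by_cases hq' : q + 1 = 0
      · have : q = -1 := eq_neg_of_add_eq_zero_left hq'
        rw [if_pos this, if_pos hq', if_neg (by rw [hq']; exact hne)]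
        omega
      · rw [if_neg hq', if_neg (fun h => hq' (by rw [h]; exact fin_m1))]
        split_ifs <;> omega

theorem QU_y (hn : 3 ≤ n) (hw : ∀ i, 2 ≤ w i) (hc : ∑ p, c p = t)
    (hcp : 1 ≤ c (-1)) {b : Fin n →₀ ℕ}
    (h2 : Finsupp.single (-1 - 1 - 1) 1 + Finsupp.single (-1 - 1) (w (-1 - 1) - 1)
      + Finsupp.single 0 (w 0) ≤ b) : b ∈ QU w t c := by
  have hne : (0 : Fin n) ≠ -1 := fun h => fin_ne1' hn 0 (by rw [zero_sub]; exact h.symm)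
  have hne1 : (0 : Fin n) + 1 ≠ 0 := fin_ne1 hn 0
  have hne2 : (0 : Fin n) + 1 ≠ -1 := by have := fin_ne2 hn 0; rwa [zero_sub] at this
  have hne3 : (0 : Fin n) ≠ -1 - 1 := fun h => hne2 (add_eq_of_eq_sub h)
  have hne4 : (-1 : Fin n) ≠ -1 - 1 := (fin_ne1' hn _).symm
  refine QU_of_delta hc (Pi.single 0 1 - Pi.single (-1) 1 + Pi.single (-1 - 1) 1) (fun q => ?_)
    (Or.inl (by simp [Finset.sum_add_distrib]))
    (fun q => ?_)
  · simp only [Pi.sub_apply, Pi.add_apply, Pi.single_apply]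
    split_ifs with h1 h2 h2 <;> try omega
    all_goals (rename_i h3 h4; subst h3; omega)
  · have hwq := hw q
    have hb := h2 q
    simp only [Finsupp.add_apply, Finsupp.single_apply] at hb
    simp only [Pi.sub_apply, Pi.add_apply, Pi.single_apply]
    have e1 : q + 1 = 0 ↔ q = -1 := ⟨fun h => (eq_neg_of_add_eq_zero_left h), fun h => by rw [h]; exact fin_m1⟩
    have e2 : q + 1 = -1 ↔ q = -1 - 1 := ⟨fun h => by rw [← h, add_sub_cancel_right], fun h => by rw [h, sub_add_cancel]⟩
    have e3 : q + 1 = -1 - 1 ↔ q = -1 - 1 - 1 := ⟨fun h => by rw [← h, add_sub_cancel_right], fun h => by rw [h, sub_add_cancel]⟩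
    simp only [e1, e2, e3]
    simp only [@eq_comm _ _ q] at hb
    have f1 : q = 0 → ¬ q = -1 := fun h h' => hne (h.symm.trans h')
    have f2 : q = 0 → ¬ q = -1 - 1 := fun h h' => hne3 (h.symm.trans h')
    have f3 : q = -1 → ¬ q = -1 - 1 := fun h h' => hne4 (h.symm.trans h')
    have g1 : q = 0 → w 0 = w q := fun h => by rw [h]
    have g2 : q = -1 - 1 → w (-1 - 1) = w q := fun h => by rw [h]
    split_ifs at hb ⊢ with i1 i2 i3 i4 i5 <;> omega

end Comb

section Structure

variable {n : ℕ} [NeZero n] {w : Fin n → ℕ} {t : ℕ} {c : Fin n → ℕ}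

theorem good_L (hn : 3 ≤ n) (hw : ∀ i, 2 ≤ w i) (p : Fin n) :
    Good w (Finsupp.single (p - 1) 1 + Finsupp.single p (w p)) := by
  have hne := fin_ne1' hn p
  refine Good.of_le_single p ?_ fun q hq => ?_
  · rw [Finsupp.add_apply, Finsupp.single_eq_of_ne hne.symm, Finsupp.single_eq_same]
    omega
  · rw [Finsupp.add_apply, Finsupp.single_eq_of_ne hq, Finsupp.single_apply]
    have := hw q
    split_ifs <;> omega

theorem good_single (hw : ∀ i, 2 ≤ w i) (p : Fin n) : Good w (Finsupp.single p (w p)) := by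
  refine Good.of_le_single p ?_ fun q hq => ?_
  · rw [Finsupp.single_eq_same]
  · rw [Finsupp.single_eq_of_ne hq]
    have := hw q
    omega

theorem good_lt (hw : ∀ i, 2 ≤ w i) {b : Fin n →₀ ℕ} (hb : ∀ p, b p < w p) : Good w b :=
  Good.of_le_single 0 (hb 0).le fun q _ => hb q

theorem arith1 (W a b : ℤ) (hW : 2 ≤ W) (ha : 0 < a) (h : W * a + b < W) :
    a + b ≤ 0 ∧ (a + b = 0 → a = 1) := by
  have h1 : W * (a - 1) ≥ 2 * (a - 1) := by nlinarith
  have h2 : W * a = W * (a - 1) + W := by ring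
  constructor
  · omega
  · intro h3; omega

theorem structure_lemma (hn : 3 ≤ n) (hw : ∀ i, 2 ≤ w i) (hc : ∑ p, c p = t)
    {b : Fin n →₀ ℕ} (hb : b ∈ QU w t c) :
    ∃ b' ∈ QU w t c, b' ≤ b ∧ (Good w b' ∨
      (1 ≤ c (-1) ∧ w 0 ≤ b' 0 ∧ Good w (b' - Finsupp.single 0 (w 0)))) := by
  obtain ⟨c', hs, hle⟩ := hb
  set δ : Fin n → ℤ := fun p => (c' p : ℤ) - c p with hδ
  have hδc : ∀ p, δ p < 0 → 1 ≤ c p := by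
    intro p hp
    simp only [hδ] at hp
    omega
  set e : Fin n → ℤ := fun p => w p * δ p + δ (p + 1) with he
  have hwZ : ∀ p, (2 : ℤ) ≤ w p := fun p => by exact_mod_cast hw p
  have heb : ∀ p, e p ≤ b p := by
    intro p
    have := hle p
    rw [Finsupp.add_apply, EE_apply, EE_apply] at this
    zify at this
    simp only [he, hδ]
    linarith
  have hsum : ∑ p, δ p = 1 ∨ (∑ p, δ p = 0 ∧ toLex c' < toLex c) := by
    have h1 : ∑ p, δ p = ((∑ p, c' p : ℕ) : ℤ) - ((∑ p, c p : ℕ) : ℤ) := by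
      push_cast
      rw [← Finset.sum_sub_distrib]
    rcases hs with h | ⟨h, h'⟩
    · left; omega
    · right; exact ⟨by omega, h'⟩
  let b1 : Fin n →₀ ℕ := Finsupp.equivFunOnFinite.symm fun p => (e p).toNat
  have hb1 : ∀ p, b1 p = (e p).toNat := fun p => rfl
  have hb1le : b1 ≤ b := by
    intro p
    have := heb p
    rw [hb1]
    omega
  have hb1Q : b1 ∈ QU w t c := by
    refine ⟨c', hs, fun p => ?_⟩
    rw [Finsupp.add_apply, EE_apply, EE_apply, hb1]
    zify
    have h1 := Int.self_le_toNat (e p)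
    have h2 : e p = w p * δ p + δ (p + 1) := rfl
    simp only [hδ] at h2
    linarith
  by_cases hA : ∃ p, p ≠ 0 ∧ 0 < δ p ∧ (w p : ℤ) ≤ e p
  · obtain ⟨p, hp0, hpos, hep⟩ := hA
    have hbp := heb p
    by_cases hprev : δ (p - 1) < 0
    · refine ⟨Finsupp.single p (w p), QU_pow hn hw hc p hp0 (hδc _ hprev) (by simp), ?_,
        Or.inl (good_single hw p)⟩
      rw [Finsupp.single_le_iff]
      omega
    · refine ⟨Finsupp.single (p - 1) 1 + Finsupp.single p (w p), QU_L hn hc p (by simp) (by simp), ?_,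
        Or.inl (good_L hn hw p)⟩
      have h1 : e (p - 1) = w (p - 1) * δ (p - 1) + δ p := by
        simp only [he, sub_add_cancel]
      have h2 := heb (p - 1)
      have h3 : 0 ≤ (w (p - 1) : ℤ) * δ (p - 1) := mul_nonneg (by positivity) (by omega)
      intro q
      rw [Finsupp.add_apply, Finsupp.single_apply, Finsupp.single_apply]
      have hne := fin_ne1' hn p
      split_ifs with i1 i2 i2
      · exact absurd (i1.trans i2.symm) hne
      · subst i1; omega
      · subst i2; omega
      · omega
  push Not at hA
  have hB : ∀ p, p ≠ 0 → 0 < δ p → δ p + δ (p + 1) ≤ 0 ∧ (δ p + δ (p + 1) = 0 → δ p = 1) :=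
    fun p hp0 hpos => arith1 _ _ _ (hwZ p) hpos (hA p hp0 hpos)
  set h : Fin n → ℤ := fun p => max (δ p) 0 - max (-δ (p + 1)) 0 with hh
  have hhsum : ∑ p, h p = ∑ p, δ p := by
    simp only [hh]
    rw [Finset.sum_sub_distrib]
    have h1 : ∑ p, max (-δ (p + 1)) 0 = ∑ p, max (-δ p) 0 :=
      Equiv.sum_comp (Equiv.addRight (1 : Fin n)) (fun p => max (-δ p) 0)
    rw [h1, ← Finset.sum_sub_distrib]
    refine Finset.sum_congr rfl fun p _ => ?_
    omega
  have hh_le : ∀ p, p ≠ 0 → h p ≤ 0 := by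
    intro p hp
    simp only [hh]
    by_cases h0 : 0 < δ p
    · have := (hB p hp h0).1
      omega
    · omega
  have hh_eq : ∀ p, p ≠ 0 → h p = 0 → (0 < δ p → δ p = 1 ∧ δ (p + 1) = -1) ∧
      (δ p ≤ 0 → 0 ≤ δ (p + 1)) := by
    intro p hp h0
    simp only [hh] at h0
    constructor
    · intro hpos
      have := hB p hp hpos
      omega
    · intro _
      omega
  have hprev0 : ∀ p : Fin n, p + 1 = 0 → e p = w p * δ p + δ 0 := by
    intro p hp
    simp only [he, hp]
  by_cases hδ0 : δ 0 ≤ 0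
  · -- first case
    have hh0 : h 0 ≤ 0 := by
      simp only [hh]; omega
    have hall : ∀ p, h p ≤ 0 := fun p => by
      by_cases hp : p = 0
      · rw [hp]; exact hh0
      · exact hh_le p hp
    have hzero : ∀ p, h p = 0 := by
      have h1 : ∑ p, h p ≤ 0 := Finset.sum_nonpos fun p _ => hall p
      have h2 : ∑ p, h p = 0 := by
        rw [hhsum] at h1 ⊢
        rcases hsum with h | h <;> omega
      intro p
      exact (Finset.sum_eq_zero_iff_of_nonpos (fun p _ => hall p)).1 h2 p (Finset.mem_univ p)
    refine ⟨b1, hb1Q, hb1le, Or.inl (good_lt hw fun p => ?_)⟩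
    rw [hb1]
    have hwp := hwZ p
    suffices h : e p ≤ w p - 1 by omega
    have hle1 : δ (p + 1) ≤ 1 := by
      by_cases hp : p + 1 = 0
      · rw [hp]; omega
      · by_cases hpos : 0 < δ (p + 1)
        · have := ((hh_eq _ hp (hzero _)).1 hpos).1
          omega
        · omega
    by_cases hpos : 0 < δ p
    · have hp : p ≠ 0 := fun h => by rw [h] at hpos; omega
      obtain ⟨h1, h2⟩ := (hh_eq p hp (hzero p)).1 hpos
      simp only [he, h1, h2]
      omega
    · have : (w p : ℤ) * δ p ≤ 0 := mul_nonpos_of_nonneg_of_nonpos (by positivity) (by omega)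
      simp only [he]
      omega
  · -- second case
    have hS : ∑ p, δ p = 1 := by
      rcases hsum with h | ⟨-, i, hj, hi⟩
      · exact h
      · exfalso
        by_cases hi0 : i = 0
        · have : c' i < c i := hi
          simp only [hδ] at hδ0
          rw [hi0] at this
          omega
        · have : c' 0 = c 0 := hj 0 (show (0 : Fin n) < i from Fin.pos_iff_ne_zero.2 hi0)
          simp only [hδ] at hδ0
          omega
    have hh0 : 1 ≤ h 0 := by
      have h1 : ∑ p ∈ Finset.univ.erase 0, h p ≤ 0 :=
        Finset.sum_nonpos fun p hp => hh_le p (Finset.ne_of_mem_erase hp)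
      have h2 := Finset.add_sum_erase Finset.univ h (Finset.mem_univ 0)
      omega
    have hh0' : max (δ 0) 0 - max (-δ (0 + 1)) 0 = h 0 := rfl
    have he0 : e 0 = w 0 * δ 0 + δ (0 + 1) := rfl
    have hw0 := hwZ 0
    have hge : (w 0 : ℤ) ≤ e 0 := by
      by_contra hlt
      have := arith1 (w 0) (δ 0) (δ (0 + 1)) hw0 (by omega) (by omega)
      omega
    have hb0 := heb 0
    have hbm := heb (-1)
    by_cases hem : 1 ≤ e (-1)
    · refine ⟨Finsupp.single (0 - 1) 1 + Finsupp.single 0 (w 0), QU_L hn hc 0 (by simp) (by simp), ?_,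
        Or.inl (good_L hn hw 0)⟩
      intro q
      rw [Finsupp.add_apply, Finsupp.single_apply, Finsupp.single_apply]
      have hne := fin_ne1' hn 0
      split_ifs with i1 i2 i2
      · exact absurd (i1.trans i2.symm) hne
      · rw [zero_sub] at i1; subst i1; omega
      · subst i2; omega
      · omega
    have hem1 : e (-1) = w (-1) * δ (-1) + δ 0 := hprev0 _ fin_m1
    have hδm : δ (-1) < 0 := by
      by_contra hcon
      have : 0 ≤ (w (-1) : ℤ) * δ (-1) := mul_nonneg (by positivity) (by omega)
      omega
    have hcm := hδc _ hδm
    by_cases hsq : 2 * (w 0 : ℤ) ≤ e 0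
    · refine ⟨Finsupp.single 0 (2 * w 0), QU_sq hn hw hc hcm (by simp), ?_, Or.inr ⟨hcm, ?_, ?_⟩⟩
      · rw [Finsupp.single_le_iff]; omega
      · rw [Finsupp.single_eq_same]; omega
      · rw [← Finsupp.single_tsub, two_mul, Nat.add_sub_cancel]
        exact good_single hw 0
    have hδ2 : δ 0 ≤ 2 := by
      by_contra hcon
      have h1 : (w 0 : ℤ) * (δ 0 - 2) ≥ 2 * (δ 0 - 2) := by nlinarith
      have h2 : (w 0 : ℤ) * δ 0 = w 0 * (δ 0 - 2) + 2 * w 0 := by ring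
      omega
    have hh01 : h 0 = 1 := by
      have h3 : δ 0 = 1 ∨ δ 0 = 2 := by omega
      rcases h3 with h3 | h3
      · rw [h3] at he0 hh0'
        omega
      · rw [h3] at he0 hh0'
        omega
    have hzero : ∀ p, p ≠ 0 → h p = 0 := by
      have h2 := Finset.add_sum_erase Finset.univ h (Finset.mem_univ 0)
      have h3 : ∑ p ∈ Finset.univ.erase 0, h p = 0 := by omega
      intro p hp
      exact (Finset.sum_eq_zero_iff_of_nonpos
        (fun p hp => hh_le p (Finset.ne_of_mem_erase hp))).1 h3 p (by simp [hp])
    refine ⟨b1, hb1Q, hb1le, Or.inr ⟨hcm, ?_, good_lt hw fun p => ?_⟩⟩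
    · rw [hb1]; omega
    · rw [Finsupp.tsub_apply, hb1]
      by_cases hp : p = 0
      · rw [hp, Finsupp.single_eq_same]
        omega
      · rw [Finsupp.single_eq_of_ne hp]
        have hwp := hwZ p
        suffices h : e p ≤ w p - 1 by omega
        by_cases hpos : 0 < δ p
        · obtain ⟨h1, h2⟩ := (hh_eq p hp (hzero p hp)).1 hpos
          simp only [he, h1, h2]
          omega
        · by_cases hp1 : p + 1 = 0
          · have : p = -1 := eq_neg_of_add_eq_zero_left hp1
            rw [this] at hwp ⊢
            omega
          · have hle1 : δ (p + 1) ≤ 1 := by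
              by_cases hpos : 0 < δ (p + 1)
              · have := ((hh_eq _ hp1 (hzero _ hp1)).1 hpos).1
                omega
              · omega
            have : (w p : ℤ) * δ p ≤ 0 := mul_nonpos_of_nonneg_of_nonpos (by positivity) (by omega)
            simp only [he]
            omega

end Structure

section Chain

variable {k : Type} [Field k] {n : ℕ} [NeZero n] {w : Fin n → ℕ} {t : ℕ} {c : Fin n → ℕ}

theorem QU_reg1 (hn : 3 ≤ n) (hw : ∀ i, 2 ≤ w i) (hc : ∑ p, c p = t) (hcm : c (-1) = 0) :
    RU k (QU w t c) (∑ p, (w p - 1) + 1) := by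
  refine good_reg _ w (fun p => by have := hw p; omega) _ (fun b hb => ?_) rfl
  obtain ⟨b', h1, h2, h3⟩ := structure_lemma hn hw hc hb
  rcases h3 with h3 | ⟨h3, -⟩
  · exact ⟨b', h1, h2, h3⟩
  · omega

theorem QU_reg2 (hn : 3 ≤ n) (hw : ∀ i, 2 ≤ w i) (hc : ∑ p, c p = t) (hcm : 1 ≤ c (-1))
    (W : ℕ) (hW : ∀ i, w i ≤ W) :
    RU k (QU w t c) (∑ p, (w p - 1) + 1 + (W - w (-1))) := by
  have hw1 := hw (-1)
  have hw2 := hw (-1 - 1)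
  have hw3 := hw (-1 - 1 - 1)
  have hne01 : (0 : Fin n) ≠ -1 := fun h => fin_ne1' hn 0 (by rw [zero_sub]; exact h.symm)
  have hne12 : (-1 : Fin n) - 1 ≠ -1 := fin_ne1' hn _
  have hne23 : (-1 : Fin n) - 1 - 1 ≠ -1 - 1 := fin_ne1' hn _
  have hne13 : (-1 : Fin n) - 1 - 1 ≠ -1 := by
    have := fin_ne2 hn ((-1 : Fin n) - 1)
    rw [sub_add_cancel] at this
    exact this.symm
  have goodC : GoodU (Function.update w (-1) 1) (colU (QU w t c) (Finsupp.single 0 (w 0))) := by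
    intro b hb
    by_cases hbm : 1 ≤ b (-1)
    · refine ⟨Finsupp.single (-1) 1, ?_, Finsupp.single_le_iff.2 hbm, ?_⟩
      · refine QU_L hn hc 0 ?_ ?_
        · rw [zero_sub]; simp
        · simp
      · refine Good.of_le_single (-1) (by simp) fun q hq => ?_
        rw [Finsupp.single_eq_of_ne hq, Function.update_of_ne hq]
        have := hw q
        omega
    · obtain ⟨b', h1, h2, h3⟩ := structure_lemma hn hw hc hb
      have hg : Good w (b' - Finsupp.single 0 (w 0)) := by
        rcases h3 with h3 | h3
        · exact h3.anti tsub_le_self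
        · exact h3.2.2
      have hle : b' - Finsupp.single 0 (w 0) ≤ b := tsub_le_iff_right.2 h2
      refine ⟨b' - Finsupp.single 0 (w 0), (QU w t c).upper le_tsub_add h1, hle,
        hg.transfer fun q => ?_⟩
      have hgq := hg.1 q
      by_cases hq : q = -1
      · subst hq
        rw [Function.update_self]
        have := hle (-1)
        omega
      · rw [Function.update_of_ne hq]
        omega
  -- abbreviations
  have s1 := sum_update w (-1) 1
  have s2 := sum_update (Function.update w (-1) 1) (-1 - 1) (w (-1 - 1) - 1)
  have s3 := sum_update (Function.update w (-1) 1) (-1 - 1) 1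
  have s4 := sum_update (Function.update (Function.update w (-1) 1) (-1 - 1) 1) (-1 - 1 - 1) 1
  rw [Function.update_of_ne hne12] at s2 s3
  rw [Function.update_of_ne hne23, Function.update_of_ne hne13] at s4
  have regC1 : RU k (addU (colU (QU w t c) (Finsupp.single 0 (w 0)))
      (Finsupp.single (-1 - 1) (w (-1 - 1) - 1)))
      (∑ p, (Function.update (Function.update w (-1) 1) (-1 - 1) (w (-1 - 1) - 1) p - 1) + 1) := by
    have hpos : ∀ q, 1 ≤ Function.update (Function.update w (-1) 1) (-1 - 1) (w (-1 - 1) - 1) q := by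
      intro q
      have := hw q
      simp only [Function.update_apply]
      split_ifs <;> omega
    refine good_reg _ _ hpos _ ?_ rfl
    have hgy : Good (Function.update (Function.update w (-1) 1) (-1 - 1) (w (-1 - 1) - 1))
        (Finsupp.single (-1 - 1) (w (-1 - 1) - 1)) := by
      refine Good.of_le_single (-1 - 1) (by simp) fun q hq => ?_
      rw [Finsupp.single_eq_of_ne hq]
      exact hpos q
    intro b hb
    rcases hb with hb | hb
    · obtain ⟨b', h1, h2, h3⟩ := goodC b hb
      by_cases hy : w (-1 - 1) - 1 ≤ b' (-1 - 1)
      · exact ⟨_, Or.inr le_rfl, (Finsupp.single_le_iff.2 hy).trans h2, hgy⟩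
      · refine ⟨b', Or.inl h1, h2, h3.transfer fun q => ?_⟩
        by_cases hq : q = -1 - 1
        · subst hq
          rw [Function.update_self]
          omega
        · rw [Function.update_of_ne hq]
          have := h3.1 q
          omega
    · exact ⟨_, Or.inr le_rfl, hb, hgy⟩
  have regC2 : RU k (colU (colU (QU w t c) (Finsupp.single 0 (w 0)))
      (Finsupp.single (-1 - 1) (w (-1 - 1) - 1)))
      (∑ p, (Function.update (Function.update (Function.update w (-1) 1) (-1 - 1) 1) (-1 - 1 - 1) 1 p - 1) + 1) := by
    have hpos : ∀ q, 1 ≤ Function.update (Function.update (Function.update w (-1) 1) (-1 - 1) 1) (-1 - 1 - 1) 1 q := by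
      intro q
      have := hw q
      simp only [Function.update_apply]
      split_ifs <;> omega
    refine good_reg _ _ hpos _ ?_ rfl
    intro b hb
    by_cases hb3 : 1 ≤ b (-1 - 1 - 1)
    · refine ⟨Finsupp.single (-1 - 1 - 1) 1, ?_, Finsupp.single_le_iff.2 hb3, ?_⟩
      · exact QU_y hn hw hc hcm le_rfl
      · refine Good.of_le_single (-1 - 1 - 1) (by simp) fun q hq => ?_
        rw [Finsupp.single_eq_of_ne hq]
        exact hpos q
    · obtain ⟨b', h1, h2, h3⟩ := goodC _ hb
      have hle : b' - Finsupp.single (-1 - 1) (w (-1 - 1) - 1) ≤ b := tsub_le_iff_right.2 h2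
      refine ⟨b' - Finsupp.single (-1 - 1) (w (-1 - 1) - 1),
        (colU (QU w t c) (Finsupp.single 0 (w 0))).upper le_tsub_add h1, hle, h3.transfer fun q => ?_⟩
      have hlq := hle q
      have h3q := h3.1 q
      by_cases hq3 : q = -1 - 1 - 1
      · subst hq3
        rw [Function.update_self]
        omega
      · rw [Function.update_of_ne hq3]
        by_cases hq2 : q = -1 - 1
        · subst hq2
          rw [Function.update_self, Finsupp.tsub_apply, Finsupp.single_eq_same]
          rw [Function.update_of_ne hne12] at h3q ⊢
          omega
        · rw [Function.update_of_ne hq2, Finsupp.tsub_apply, Finsupp.single_eq_of_ne hq2]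
          omega
  have hG : w (-1) - 1 ≤ ∑ p, (w p - 1) :=
    Finset.single_le_sum (f := fun p => w p - 1) (fun _ _ => Nat.zero_le _) (Finset.mem_univ (-1))
  have regC : RU k (colU (QU w t c) (Finsupp.single 0 (w 0)))
      (∑ p, (Function.update (Function.update w (-1) 1) (-1 - 1) (w (-1 - 1) - 1) p - 1) + 1) := by
    refine RU.L1 _ regC2 regC1 ?_
    rw [Finsupp.degree_single]
    omega
  have regA : RU k (addU (QU w t c) (Finsupp.single 0 (w 0))) (∑ p, (w p - 1) + 1) := by
    refine good_reg _ w (fun p => by have := hw p; omega) _ (fun b hb => ?_) rfl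
    rcases hb with hb | hb
    · obtain ⟨b', h1, h2, h3⟩ := structure_lemma hn hw hc hb
      rcases h3 with h3 | ⟨-, h3, -⟩
      · exact ⟨b', Or.inl h1, h2, h3⟩
      · exact ⟨_, Or.inr le_rfl, (Finsupp.single_le_iff.2 h3).trans h2, good_single hw 0⟩
    · exact ⟨_, Or.inr le_rfl, hb, good_single hw 0⟩
  refine RU.L1 _ regC (regA.mono (by omega)) ?_
  rw [Finsupp.degree_single]
  have := hW 0
  have := hW (-1)
  omega

theorem EE_degree (w c : Fin n → ℕ) : (EE w c).degree = ∑ p, c p * (w p + 1) := by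
  rw [Finsupp.degree_eq_sum]
  simp only [EE_apply]
  rw [Finset.sum_add_distrib]
  have h1 : ∑ p, c (p + 1) = ∑ p, c p := Equiv.sum_comp (Equiv.addRight (1 : Fin n)) c
  rw [h1, ← Finset.sum_add_distrib]
  exact Finset.sum_congr rfl fun p _ => by ring

theorem EE_degree_le (hc : ∑ p, c p = t) (W : ℕ) (hW : ∀ i, w i ≤ W) :
    (EE w c).degree ≤ t * (W + 1) := by
  rw [EE_degree, ← hc, Finset.sum_mul]
  exact Finset.sum_le_sum fun p _ => Nat.mul_le_mul_left _ (Nat.succ_le_succ (hW p))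

theorem EE_degree_le' (hc : ∑ p, c p = t) (W : ℕ) (hW : ∀ i, w i ≤ W) (q : Fin n) (hq : 1 ≤ c q) :
    (EE w c).degree + (W - w q) ≤ t * (W + 1) := by
  rw [EE_degree, ← hc, Finset.sum_mul]
  have h1 : W - w q ≤ ∑ p, c p * (W - w p) :=
    (Nat.le_mul_of_pos_left _ hq).trans
      (Finset.single_le_sum (f := fun p => c p * (W - w p)) (fun _ _ => Nat.zero_le _) (Finset.mem_univ q))
  have h2 : ∑ p, c p * (W + 1) = ∑ p, c p * (w p + 1) + ∑ p, c p * (W - w p) := by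
    rw [← Finset.sum_add_distrib]
    refine Finset.sum_congr rfl fun p _ => ?_
    rw [← mul_add]
    have := hW p
    congr 1
    omega
  omega

/-- Intermediate ideals. -/
def chainU (w : Fin n → ℕ) (t : ℕ) (s : Finset (Lex (Fin n → ℕ))) : UpperSet (Fin n →₀ ℕ) where
  carrier := {a | a ∈ powU w (t + 1) ∨ ∃ c ∈ s, EE w (ofLex c) ≤ a}
  upper' := fun _ _ hab h => h.imp (fun h => (powU w (t + 1)).upper hab h)
    (fun ⟨c, hc, h⟩ => ⟨c, hc, h.trans hab⟩)

theorem mem_chainU {s : Finset (Lex (Fin n → ℕ))} {a : Fin n →₀ ℕ} :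
    a ∈ chainU w t s ↔ a ∈ powU w (t + 1) ∨ ∃ c ∈ s, EE w (ofLex c) ≤ a := Iff.rfl

theorem chain_step (hn : 3 ≤ n) (hw : ∀ i, 2 ≤ w i) (W : ℕ) (hW : ∀ i, w i ≤ W)
    (s : Finset (Lex (Fin n → ℕ))) :
    (∀ x ∈ s, ∑ p, (ofLex x) p = t) → 
    (∀ x ∈ s, ∀ y : Lex (Fin n → ℕ), ∑ p, (ofLex y) p = t → y < x → y ∈ s) →
    RU k (chainU w t s) (∑ p, (w p - 1) + 1 + t * (W + 1)) →
    RU k (powU w (t + 1)) (∑ p, (w p - 1) + 1 + t * (W + 1)) := by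
  induction s using Finset.induction_on_max with
  | empty =>
    intro _ _ h
    refine RU.congr (fun a => ?_) h
    rw [mem_chainU]
    simp
  | insert a s ha ih =>
    intro h1 h2 h3
    have hs1 : ∀ x ∈ s, ∑ p, (ofLex x) p = t := fun x hx => h1 x (Finset.mem_insert_of_mem hx)
    have hs2 : ∀ x ∈ s, ∀ y : Lex (Fin n → ℕ), ∑ p, (ofLex y) p = t → y < x → y ∈ s := by
      intro x hx y hy hyx
      have := h2 x (Finset.mem_insert_of_mem hx) y hy hyx
      rw [Finset.mem_insert] at this
      refine this.resolve_left fun h => ?_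
      rw [h] at hyx
      exact lt_asymm hyx (ha x hx)
    refine ih hs1 hs2 ?_
    have hat : ∑ p, (ofLex a) p = t := h1 a (Finset.mem_insert_self _ _)
    have hQ : ∀ b, b ∈ QU w t (ofLex a) ↔ b ∈ colU (chainU w t s) (EE w (ofLex a)) := by
      intro b
      rw [mem_colU, mem_QU, mem_chainU, mem_powU]
      constructor
      · rintro ⟨c', h | ⟨h, h'⟩, hle⟩
        · exact Or.inl ⟨c', h, hle⟩
        · refine Or.inr ⟨toLex c', ?_, hle⟩
          have := h2 a (Finset.mem_insert_self _ _) (toLex c') h h'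
          rw [Finset.mem_insert] at this
          exact this.resolve_left h'.ne
      · rintro (⟨c', h, hle⟩ | ⟨c', h, hle⟩)
        · exact ⟨c', Or.inl h, hle⟩
        · exact ⟨ofLex c', Or.inr ⟨hs1 _ h, ha _ h⟩, hle⟩
    have hadd : RU k (addU (chainU w t s) (EE w (ofLex a))) (∑ p, (w p - 1) + 1 + t * (W + 1)) := by
      refine RU.congr (fun b => ?_) h3
      rw [mem_addU, mem_chainU, mem_chainU]
      simp only [Finset.mem_insert, exists_eq_or_imp]
      rw [or_assoc]
      exact or_congr_right or_comm
    by_cases hcm : 1 ≤ (ofLex a) (-1)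
    · refine RU.L1 _ (RU.congr hQ (QU_reg2 hn hw hat hcm W hW)) hadd ?_
      have := EE_degree_le' hat W hW (-1) hcm
      omega
    · refine RU.L1 _ (RU.congr hQ (QU_reg1 hn hw hat (by omega))) hadd ?_
      have := EE_degree_le hat W hW
      omega

theorem powU_succ (hn : 3 ≤ n) (hw : ∀ i, 2 ≤ w i) (W : ℕ) (hW : ∀ i, w i ≤ W) {R : ℕ}
    (hR : R ≤ ∑ p, (w p - 1) + 1 + t * (W + 1)) (h : RU k (powU w t) R) :
    RU k (powU w (t + 1)) (∑ p, (w p - 1) + 1 + t * (W + 1)) := by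
  classical
  refine chain_step hn hw W hW ((Finset.piAntidiag Finset.univ t).map toLex.toEmbedding) ?_ ?_ ?_
  · intro x hx
    rw [Finset.mem_map] at hx
    obtain ⟨y, hy, rfl⟩ := hx
    rw [Finset.mem_piAntidiag] at hy
    exact hy.1
  · intro x hx y hy _
    rw [Finset.mem_map]
    exact ⟨ofLex y, by rw [Finset.mem_piAntidiag]; exact ⟨hy, by simp⟩, rfl⟩
  · refine RU.congr (fun a => ?_) (h.mono hR)
    rw [mem_chainU, mem_powU]
    constructor
    · rintro ⟨c, hc, hle⟩
      refine Or.inr ⟨toLex c, ?_, hle⟩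
      rw [Finset.mem_map]
      exact ⟨c, by rw [Finset.mem_piAntidiag]; exact ⟨hc, by simp⟩, rfl⟩
    · rintro (⟨c, hc, hle⟩ | ⟨c, hc, hle⟩)
      · obtain ⟨p, hp⟩ : ∃ p, 1 ≤ c p := by
          by_contra hcon
          push Not at hcon
          have : ∑ p, c p = 0 := Finset.sum_eq_zero fun p _ => by have := hcon p; omega
          omega
        have hs := Finset.sum_update_of_mem (Finset.mem_univ p) c (c p - 1)
        have hs' := Finset.add_sum_erase Finset.univ c (Finset.mem_univ p)
        rw [← Finset.erase_eq] at hs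
        have hlec : ∀ q, Function.update c p (c p - 1) q ≤ c q := by
          intro q
          by_cases hq : q = p
          · subst hq; rw [Function.update_self]; omega
          · rw [Function.update_of_ne hq]
        refine ⟨Function.update c p (c p - 1), by omega, le_trans (fun q => ?_) hle⟩
        rw [EE_apply, EE_apply]
        exact add_le_add (Nat.mul_le_mul_left _ (hlec q)) (hlec _)
      · rw [Finset.mem_map] at hc
        obtain ⟨y, hy, rfl⟩ := hc
        rw [Finset.mem_piAntidiag] at hy
        exact ⟨y, hy.1, hle⟩

theorem powU_reg (hn : 3 ≤ n) (hw : ∀ i, 2 ≤ w i) (W : ℕ) (hW : ∀ i, w i ≤ W) (t : ℕ) :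
    RU k (powU w (t + 1)) (∑ p, (w p - 1) + 1 + t * (W + 1)) := by
  induction t with
  | zero =>
    refine powU_succ hn hw W hW (R := 0) (Nat.zero_le _) (RU.full ?_ 0)
    rw [mem_powU]
    exact ⟨0, by simp, fun p => by simp⟩
  | succ t ih =>
    refine powU_succ hn hw W hW ?_ ih
    gcongr
    omega

end Chain

section Extract

variable {k : Type} [Field k] {σ : Type}

/-- Graded resolutions of a graded module. -/
structure ResOf (M : GMod k σ) (R : ℕ) where
  rk : ℕ → ℕ
  deg : (i : ℕ) → Fin (rk i) → ℕ
  aug : (Fin (rk 0) →₀ MvPolynomial σ k) →ₗ[MvPolynomial σ k] M.M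
  d : (i : ℕ) →
    ((Fin (rk (i + 1)) →₀ MvPolynomial σ k) →ₗ[MvPolynomial σ k] (Fin (rk i) →₀ MvPolynomial σ k))
  surj : Function.Surjective aug
  exact_zero : LinearMap.range (d 0) = LinearMap.ker aug
  exact_succ : ∀ i, LinearMap.range (d (i + 1)) = LinearMap.ker (d i)
  aug_graded : ∀ b, aug (Finsupp.single b 1) ∈ M.gr (deg 0 b)
  d_graded : ∀ i b c, Hm (deg i c) ((d i (Finsupp.single b 1)) c) (deg (i + 1) b)
  deg_le : ∀ i b, deg i b ≤ R + i

theorem resOf_of_regN (p : ℕ) (M : GMod k σ) (R : ℕ) (h : RegN p M R) : Nonempty (ResOf M R) := by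
  induction p generalizing M R with
  | zero =>
    have hM : Subsingleton M.M := h
    exact ⟨{
      rk := fun _ => 0
      deg := fun _ b => b.elim0
      aug := 0
      d := fun _ => 0
      surj := fun m => ⟨0, Subsingleton.elim _ _⟩
      exact_zero := Subsingleton.elim _ _
      exact_succ := fun i => Subsingleton.elim _ _
      aug_graded := fun b => b.elim0
      d_graded := fun i b => b.elim0
      deg_le := fun i b => b.elim0 }⟩
  | succ p ih =>
    obtain ⟨ι, h1, h2, deg, f, h3, h4, h5, h6, h7⟩ := h
    obtain ⟨r⟩ := ih _ _ h7
    let ec : ι ≃ Fin (Fintype.card ι) := Fintype.equivFin ι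
    let conv : (Fin (Fintype.card ι) →₀ MvPolynomial σ k) ≃ₗ[MvPolynomial σ k] (ι → MvPolynomial σ k) :=
      (Finsupp.linearEquivFunOnFinite (MvPolynomial σ k) (MvPolynomial σ k) (Fin (Fintype.card ι))).trans
        (LinearEquiv.funCongrLeft (MvPolynomial σ k) (MvPolynomial σ k) ec)
    have hconv : ∀ v i, conv v i = v (ec i) := fun v i => rfl
    have hconv' : ∀ v j, conv.symm v j = v (ec.symm j) := by
      intro v j
      obtain ⟨u, rfl⟩ := conv.surjective v
      rw [LinearEquiv.symm_apply_apply, hconv, Equiv.apply_symm_apply]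
    have hsing : ∀ j, conv (Finsupp.single j 1) = Pi.single (ec.symm j) 1 := by
      intro j
      funext i
      rw [hconv, Finsupp.single_apply, Pi.single_apply]
      refine if_congr ?_ rfl rfl
      rw [eq_comm, Equiv.eq_symm_apply]
    let rd : (Fin (r.rk 0) →₀ MvPolynomial σ k) →ₗ[MvPolynomial σ k] (ι → MvPolynomial σ k) :=
      (LinearMap.ker f).subtype ∘ₗ r.aug
    have hrd : ∀ v, f v = 0 → ∃ u, rd u = v := by
      intro v hv
      obtain ⟨u, hu⟩ := r.surj ⟨v, hv⟩
      exact ⟨u, congrArg Subtype.val hu⟩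
    have hrd' : ∀ u, f (rd u) = 0 := fun u => (r.aug u).2
    have hrd0 : ∀ u, rd u = 0 ↔ r.aug u = 0 := fun u =>
      ⟨fun h => Subtype.ext h, fun h => congrArg Subtype.val h⟩
    exact ⟨{
      rk := fun i => Nat.casesOn i (Fintype.card ι) r.rk
      deg := fun i => match i with
        | 0 => fun b => deg (ec.symm b)
        | i + 1 => r.deg i
      aug := f ∘ₗ conv.toLinearMap
      d := fun i => match i with
        | 0 => conv.symm.toLinearMap ∘ₗ rd
        | i + 1 => r.d i
      surj := h4.comp conv.surjective
      exact_zero := by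
        ext x
        simp only [LinearMap.mem_range, LinearMap.mem_ker, LinearMap.comp_apply,
          LinearEquiv.coe_coe]
        constructor
        · rintro ⟨u, rfl⟩
          rw [LinearEquiv.apply_symm_apply]
          exact hrd' u
        · intro hx
          obtain ⟨u, hu⟩ := hrd _ hx
          exact ⟨u, by rw [hu, LinearEquiv.symm_apply_apply]⟩
      exact_succ := fun i => match i with
        | 0 => by
          show LinearMap.range (r.d 0) = LinearMap.ker (conv.symm.toLinearMap ∘ₗ rd)
          rw [r.exact_zero]
          ext u
          rw [LinearMap.mem_ker, LinearMap.mem_ker, LinearMap.comp_apply, LinearEquiv.coe_coe,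
            LinearEquiv.map_eq_zero_iff, hrd0]
        | i + 1 => r.exact_succ i
      aug_graded := fun b => by
        show f (conv (Finsupp.single b 1)) ∈ _
        rw [hsing]
        exact h5 _
      d_graded := fun i => match i with
        | 0 => fun b c => by
          show Hm (deg (ec.symm c)) (conv.symm (rd (Finsupp.single b 1)) c) (r.deg 0 b)
          rw [hconv']
          exact r.aug_graded b (ec.symm c)
        | i + 1 => fun b c => r.d_graded i b c
      deg_le := fun i => match i with
        | 0 => fun b => h3 _
        | i + 1 => fun b => by
          show r.deg i b ≤ _
          have := r.deg_le i b
          omega }⟩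

theorem exists_res {J : Ideal (MvPolynomial σ k)} {R : ℕ} (h : Reg (IdealG J 0) R) :
    ∃ F : GradedFreeRes k σ J, ∀ i b, F.deg i b ≤ R + i := by
  obtain ⟨p, hp⟩ := h
  obtain ⟨r⟩ := resOf_of_regN p _ R hp
  let a : (Fin (r.rk 0) →₀ MvPolynomial σ k) →ₗ[MvPolynomial σ k] J := r.aug
  refine ⟨{
    rk := r.rk
    deg := r.deg
    aug := J.subtype ∘ₗ a
    d := r.d
    aug_range := ?_
    exact_zero := ?_
    exact_succ := r.exact_succ
    aug_graded := fun b => Hm.isHomogeneous (r.aug_graded b)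
    d_graded := fun i b c => ?_ }, r.deg_le⟩
  · rw [LinearMap.range_comp, LinearMap.range_eq_top.2 r.surj, Submodule.map_top,
      Submodule.range_subtype]
  · rw [r.exact_zero]
    ext u
    rw [LinearMap.mem_ker, LinearMap.mem_ker, LinearMap.comp_apply]
    exact ⟨fun h => congrArg Subtype.val h, fun h => Subtype.ext h⟩
  · by_cases h0 : r.d i (Finsupp.single b 1) c = 0
    · exact Or.inl h0
    · right
      obtain ⟨m, hm, hh⟩ := (r.d_graded i b c).exists h0
      exact ⟨m, hm, hh.isHomogeneous⟩

end Extract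

section Powers

variable {k : Type} [Field k] {n : ℕ} [NeZero n]

theorem MI_mul_le (w : Fin n → ℕ) (s t : ℕ) :
    MI (k := k) (powU w s) * MI (powU w t) ≤ MI (powU w (s + t)) := by
  classical
  rw [Ideal.mul_le]
  intro p hp q hq a ha
  rw [coeff_mul] at ha
  obtain ⟨⟨x, y⟩, hxy, hne⟩ := Finset.exists_ne_zero_of_sum_ne_zero ha
  have hxy' : x + y = a := by simpa using hxy
  obtain ⟨c1, h1, l1⟩ := hp x (left_ne_zero_of_mul hne)
  obtain ⟨c2, h2, l2⟩ := hq y (right_ne_zero_of_mul hne)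
  refine ⟨c1 + c2, by simp [Finset.sum_add_distrib, h1, h2], ?_⟩
  rw [← hxy']
  refine le_trans (fun p => ?_) (add_le_add l1 l2)
  simp only [EE_apply, Finsupp.add_apply, Pi.add_apply]
  apply le_of_eq
  ring

theorem sum_cycE (w c : Fin n → ℕ) : ∑ i, c i • cycE n w i = EE w c := by
  ext p
  rw [Finsupp.finsetSum_apply, EE_apply]
  simp only [cycE, Finsupp.smul_apply, Finsupp.add_apply, Finsupp.single_apply, smul_add, smul_eq_mul,
    Finset.sum_add_distrib, mul_ite, mul_one, mul_zero]
  have e : ∀ x : Fin n, x - 1 = p ↔ x = p + 1 := fun x => sub_eq_iff_eq_add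
  simp only [e]
  rw [Finset.sum_ite_eq', Finset.sum_ite_eq']
  simp only [Finset.mem_univ, if_true]
  ring

theorem cycIdeal_pow (w : Fin n → ℕ) (t : ℕ) : (cycIdeal k n w) ^ t = MI (powU w t) := by
  classical
  apply le_antisymm
  · induction t with
    | zero =>
      intro p _ a _
      exact ⟨0, by simp, fun p => by simp⟩
    | succ t ih =>
      rw [pow_succ]
      refine le_trans (Ideal.mul_mono ih ?_) (MI_mul_le w t 1)
      unfold cycIdeal
      rw [Ideal.span_le]
      rintro _ ⟨i, rfl⟩ a ha
      unfold cycL at ha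
      rw [coeff_monomial] at ha
      split_ifs at ha with h
      · refine ⟨Pi.single i 1, by simp, ?_⟩
        rw [← sum_cycE, ← h]
        apply le_of_eq
        rw [Finset.sum_eq_single i]
        · simp
        · intro j _ hj
          simp [hj]
        · simp
      · exact absurd rfl ha
  · intro p hp
    rw [p.as_sum]
    refine Ideal.sum_mem _ fun a ha => ?_
    obtain ⟨c, hc, hle⟩ := hp a (mem_support_iff.1 ha)
    have h1 : monomial (EE w c) (1 : k) ∈ (cycIdeal k n w) ^ t := by
      rw [← sum_cycE, monomial_sum_one, ← hc, ← Finset.prod_pow_eq_pow_sum]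
      refine Ideal.prod_mem_prod fun i _ => ?_
      have : monomial (c i • cycE n w i) (1 : k) = (cycL k n w i) ^ c i := by
        unfold cycL
        rw [monomial_pow, one_pow]
      rw [this]
      exact Ideal.pow_mem_pow (Ideal.subset_span (Set.mem_range_self i)) _
    have h2 : monomial a (coeff a p) = monomial (a - EE w c) (coeff a p) * monomial (EE w c) (1 : k) := by
      rw [monomial_mul, mul_one, tsub_add_cancel_of_le hle]
    rw [h2]
    exact Ideal.mul_mem_left _ _ h1

end Powers

section Lower

variable {k : Type} [Field k]

/-- Component of `p` of degree `N` when `1` is placed in degree `d`. -/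
def hcomp {σ : Type} (d N : ℕ) : MvPolynomial σ k →+ MvPolynomial σ k :=
  if d ≤ N then (homogeneousComponent (N - d)).toAddMonoidHom else 0

theorem coeff_hcomp {σ : Type} (d N : ℕ) (p : MvPolynomial σ k) (a : σ →₀ ℕ) :
    coeff a (hcomp d N p) = if a.degree + d = N then coeff a p else 0 := by
  unfold hcomp
  by_cases h : d ≤ N
  · rw [if_pos h]
    show coeff a (homogeneousComponent (N - d) p) = _
    rw [coeff_homogeneousComponent]
    refine if_congr ?_ rfl rfl
    omega
  · rw [if_neg h, if_neg (by omega)]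
    simp

theorem hcomp_of_Hm {σ : Type} {d N : ℕ} {p : MvPolynomial σ k} (h : Hm d p N) : hcomp d N p = p := by
  ext a
  rw [coeff_hcomp]
  split_ifs with h1
  · rfl
  · by_contra hne
    exact h1 (h a (Ne.symm hne))

theorem hcomp_of_Hm_ne {σ : Type} {d N M : ℕ} {p : MvPolynomial σ k} (h : Hm d p M) (hne : M ≠ N) :
    hcomp d N p = 0 := by
  ext a
  rw [coeff_hcomp]
  split_ifs with h1
  · by_contra hn
    exact hne ((h a hn).symm.trans h1)
  · simp

theorem Hm_hcomp {σ : Type} (d N : ℕ) (p : MvPolynomial σ k) : Hm d (hcomp d N p) N := by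
  intro a ha
  rw [coeff_hcomp] at ha
  by_contra hne
  rw [if_neg hne] at ha
  exact ha rfl

/-- Components of vectors. -/
def vcomp {σ ι : Type} (deg : ι → ℕ) (N : ℕ) : (ι → MvPolynomial σ k) →+ (ι → MvPolynomial σ k) where
  toFun v i := hcomp (deg i) N (v i)
  map_zero' := by funext i; simp
  map_add' u v := by funext i; simp

theorem vcomp_apply {σ ι : Type} (deg : ι → ℕ) (N : ℕ) (v : ι → MvPolynomial σ k) (i : ι) :
    vcomp deg N v i = hcomp (deg i) N (v i) := rfl

theorem vcomp_comm {σ : Type} {ι κ : Type} [Fintype ι] [DecidableEq ι] (deg : ι → ℕ) (deg' : κ → ℕ)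
    (f : (ι → MvPolynomial σ k) →ₗ[MvPolynomial σ k] (κ → MvPolynomial σ k))
    (hf : ∀ i l, Hm (deg' l) (f (Pi.single i 1) l) (deg i)) (N : ℕ) (v : ι → MvPolynomial σ k) :
    f (vcomp deg N v) = vcomp deg' N (f v) := by
  let A : (ι → MvPolynomial σ k) →+ (κ → MvPolynomial σ k) := f.toAddMonoidHom.comp (vcomp deg N)
  let B : (ι → MvPolynomial σ k) →+ (κ → MvPolynomial σ k) := (vcomp deg' N).comp f.toAddMonoidHom
  have key : A = B := by
    apply AddMonoidHom.functions_ext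
    intro i p
    have : ∀ (a : σ →₀ ℕ) (r : k), A (Pi.single i (monomial a r)) = B (Pi.single i (monomial a r)) := by
      intro a r
      classical
      have hm : (Pi.single i (monomial a r) : ι → MvPolynomial σ k) ∈
          (FreeG (k := k) (σ := σ) deg).gr (a.degree + deg i) := by
        intro j b hb
        by_cases hj : j = i
        · subst hj
          rw [Pi.single_eq_same, coeff_monomial] at hb
          split_ifs at hb with h
          · rw [h]
          · exact absurd rfl hb
        · rw [Pi.single_eq_of_ne hj] at hb
          simp at hb
      have hfm := free_map_gr (M := FreeG (k := k) (σ := σ) deg') f (fun i l => hf i l) _ _ hm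
      show f (vcomp deg N _) = vcomp deg' N (f _)
      by_cases hN : a.degree + deg i = N
      · have e1 : vcomp deg N (Pi.single i (monomial a r)) = (Pi.single i (monomial a r)) := by
          funext j
          exact hcomp_of_Hm (hN ▸ hm j)
        rw [e1]
        funext l
        exact (hcomp_of_Hm (hN ▸ hfm l)).symm
      · have e1 : vcomp deg N (Pi.single i (monomial a r)) = 0 := by
          funext j
          exact hcomp_of_Hm_ne (hm j) hN
        rw [e1, map_zero]
        funext l
        exact (hcomp_of_Hm_ne (hfm l) hN).symm
    induction p using MvPolynomial.induction_on' with
    | monomial a r => exact this a r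
    | add p q hp hq => rw [Pi.single_add, map_add, map_add, hp, hq]
  exact DFunLike.congr_fun key v

theorem map_mem_vec {σ : Type} {ι κ : Type} [Fintype ι] [DecidableEq ι]
    (f : (ι → MvPolynomial σ k) →ₗ[MvPolynomial σ k] (κ → MvPolynomial σ k))
    (I : Ideal (MvPolynomial σ k)) (v : ι → MvPolynomial σ k) (hv : ∀ i, v i ∈ I) (l : κ) :
    f v l ∈ I := by
  have h1 : v = ∑ i, v i • (Pi.single i (1 : MvPolynomial σ k) : ι → MvPolynomial σ k) := by
    conv_lhs => rw [← Finset.univ_sum_single v]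
    refine Finset.sum_congr rfl fun i _ => ?_
    rw [← Pi.single_smul]
    simp
  rw [h1, map_sum, Finset.sum_apply]
  refine Ideal.sum_mem _ fun i _ => ?_
  rw [map_smul, Pi.smul_apply, smul_eq_mul]
  exact Ideal.mul_mem_right _ _ (hv i)

variable {n : ℕ}

/-- Exponents involving one of the first `r` variables. -/
def firstU (n r : ℕ) : UpperSet (Fin n →₀ ℕ) where
  carrier := {a | ∃ i : Fin n, i.val < r ∧ 1 ≤ a i}
  upper' := fun _ _ hab ⟨i, hi, h⟩ => ⟨i, hi, h.trans (hab i)⟩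

variable (k n) in
/-- The ideal generated by the first `r` variables. -/
def QI (r : ℕ) : Ideal (MvPolynomial (Fin n) k) := MI (firstU n r)

theorem QI_zero {p : MvPolynomial (Fin n) k} (h : p ∈ QI k n 0) : p = 0 := by
  ext a
  by_contra hne
  obtain ⟨i, hi, -⟩ := h a hne
  omega

theorem QI_mono (r : ℕ) {p : MvPolynomial (Fin n) k} (h : p ∈ QI k n r) : p ∈ QI k n (r + 1) := by
  intro a ha
  obtain ⟨i, hi, h1⟩ := h a ha
  exact ⟨i, by omega, h1⟩

theorem QI_X (i : Fin n) (p : MvPolynomial (Fin n) k) : X i * p ∈ QI k n (i.val + 1) := by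
  rw [mul_comm]
  refine mul_mon_mem.2 fun a ha => ⟨i, by omega, ?_⟩
  simp

theorem QI_cancel (i : Fin n) {p : MvPolynomial (Fin n) k} (h : X i * p ∈ QI k n i.val) :
    p ∈ QI k n i.val := by
  rw [mul_comm] at h
  have h' := mul_mon_mem.1 h
  intro a ha
  obtain ⟨j, hj, h1⟩ := h' a ha
  refine ⟨j, hj, ?_⟩
  have : j ≠ i := fun h => by rw [h] at hj; omega
  rw [Finsupp.add_apply, Finsupp.single_eq_of_ne this] at h1
  exact h1

theorem QI_decomp (i : Fin n) {p : MvPolynomial (Fin n) k} (h : p ∈ QI k n (i.val + 1)) :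
    ∃ x ∈ QI k n i.val, ∃ y, p = x + X i * y := by
  obtain ⟨x, y, hx, hxy, -⟩ := decomp (firstU n i.val) (Finsupp.single i 1) p (fun a ha => by
    obtain ⟨j, hj, h1⟩ := h a ha
    by_cases hji : j = i
    · right
      rw [Finsupp.single_le_iff]
      exact hji ▸ h1
    · left
      refine ⟨j, ?_, h1⟩
      have : j.val ≠ i.val := fun h => hji (Fin.ext h)
      omega)
  exact ⟨x, hx, y, by rw [hxy, mul_comm]; rfl⟩

theorem QI_hcomp (r d N : ℕ) {p : MvPolynomial (Fin n) k} (h : p ∈ QI k n r) :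
    hcomp d N p ∈ QI k n r := by
  intro a ha
  rw [coeff_hcomp] at ha
  split_ifs at ha
  · exact h a ha
  · exact absurd rfl ha

theorem QI_full {p : MvPolynomial (Fin n) k} (h : p ∉ QI k n n) : coeff 0 p ≠ 0 := by
  intro h0
  apply h
  intro a ha
  have hne : a ≠ 0 := fun h => ha (h ▸ h0)
  obtain ⟨i, hi⟩ := Finsupp.ne_iff.1 hne
  have hi' : a i ≠ 0 := hi
  exact ⟨i, i.2, by omega⟩

section Zigzag

variable (rk : ℕ → ℕ) (dg : ∀ i, Fin (rk i) → ℕ)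
  (D : ∀ i, (Fin (rk (i + 1)) → MvPolynomial (Fin n) k) →ₗ[MvPolynomial (Fin n) k]
    (Fin (rk i) → MvPolynomial (Fin n) k))

/-- Vectors with entries in the ideal of the first variables. -/
def VQ (r m : ℕ) : Submodule (MvPolynomial (Fin n) k) (Fin m → MvPolynomial (Fin n) k) :=
  Submodule.pi Set.univ fun _ => (QI k n r : Submodule (MvPolynomial (Fin n) k) (MvPolynomial (Fin n) k))

theorem mem_VQ {r m : ℕ} {v : Fin m → MvPolynomial (Fin n) k} : v ∈ VQ r m ↔ ∀ j, v j ∈ QI k n r := by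
  simp [VQ, Submodule.mem_pi]

theorem VQ_map (r : ℕ) (i : ℕ) {v} (h : v ∈ VQ r (rk (i + 1))) : D i v ∈ VQ r (rk i) :=
  mem_VQ.2 fun l => map_mem_vec (D i) _ v (mem_VQ.1 h) l

theorem VQ_mono (r m : ℕ) {v : Fin m → MvPolynomial (Fin n) k} (h : v ∈ VQ r m) : v ∈ VQ (r + 1) m :=
  mem_VQ.2 fun j => QI_mono r (mem_VQ.1 h j)

theorem VQ_X (i : Fin n) (m : ℕ) (v : Fin m → MvPolynomial (Fin n) k) :
    (X i : MvPolynomial (Fin n) k) • v ∈ VQ (i.val + 1) m :=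
  mem_VQ.2 fun j => QI_X i _

theorem VQ_cancel (i : Fin n) {m : ℕ} {v : Fin m → MvPolynomial (Fin n) k}
    (h : (X i : MvPolynomial (Fin n) k) • v ∈ VQ i.val m) : v ∈ VQ i.val m :=
  mem_VQ.2 fun j => QI_cancel i (mem_VQ.1 h j)

theorem VQ_decomp (i : Fin n) {m : ℕ} {v : Fin m → MvPolynomial (Fin n) k}
    (h : v ∈ VQ (i.val + 1) m) :
    ∃ x ∈ VQ i.val m, ∃ y, v = x + (X i : MvPolynomial (Fin n) k) • y := by
  choose x hx y hy using fun j => QI_decomp i (mem_VQ.1 h j)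
  exact ⟨x, mem_VQ.2 hx, y, funext hy⟩

theorem VQ_zero {m : ℕ} {v : Fin m → MvPolynomial (Fin n) k} (h : v ∈ VQ 0 m) : v = 0 :=
  funext fun j => QI_zero (mem_VQ.1 h j)

theorem exact_mod
    (hDD : ∀ i v, D i (D (i + 1) v) = 0)
    (hex : ∀ i v, D i v = 0 → ∃ u, D (i + 1) u = v)
    (r : ℕ) (hr : r ≤ n) (i : ℕ) (hi : r ≤ i) (v) (hv : D i v ∈ VQ r (rk i)) :
    ∃ u, v - D (i + 1) u ∈ VQ r (rk (i + 1)) := by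
  induction r generalizing i v with
  | zero =>
    obtain ⟨u, hu⟩ := hex i v (VQ_zero hv)
    exact ⟨u, by rw [hu, sub_self]; exact Submodule.zero_mem _⟩
  | succ r ih =>
    let x : Fin n := ⟨r, by omega⟩
    obtain ⟨a, ha, b, hab⟩ := VQ_decomp x hv
    obtain ⟨i, rfl⟩ : ∃ i', i = i' + 1 := ⟨i - 1, by omega⟩
    have h1 : D i b ∈ VQ r (rk i) := by
      apply VQ_cancel x
      have h2 := hDD i v
      rw [hab, map_add, map_smul] at h2
      rw [← neg_eq_iff_add_eq_zero.2 h2]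
      exact Submodule.neg_mem _ (VQ_map rk D r i ha)
    obtain ⟨w1, hw1⟩ := ih (by omega) i (by omega) b h1
    obtain ⟨u, hu⟩ := ih (by omega) (i + 1) (by omega) (v - (X x : MvPolynomial (Fin n) k) • w1) (by
      rw [map_sub, map_smul, hab]
      have : a + (X x : MvPolynomial (Fin n) k) • b - (X x : MvPolynomial (Fin n) k) • (D (i + 1)) w1
          = a + (X x : MvPolynomial (Fin n) k) • (b - D (i + 1) w1) := by
        rw [smul_sub]; abel
      rw [this]
      exact Submodule.add_mem _ ha (Submodule.smul_mem _ _ hw1))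
    refine ⟨u, ?_⟩
    have e : v - D (i + 1 + 1) u = (v - (X x : MvPolynomial (Fin n) k) • w1 - D (i + 1 + 1) u)
        + (X x : MvPolynomial (Fin n) k) • w1 := by abel
    rw [e]
    exact Submodule.add_mem _ (VQ_mono _ _ hu) (VQ_X x _ w1)

theorem zigzag
    (hDD : ∀ i v, D i (D (i + 1) v) = 0)
    (hex : ∀ i v, D i v = 0 → ∃ u, D (i + 1) u = v)
    (hgr : ∀ i j l, Hm (dg i l) (D i (Pi.single j 1) l) (dg (i + 1) j))
    (s : ℕ) (u0 : Fin (rk 0) → MvPolynomial (Fin n) k)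
    (h0 : ∀ j, Hm (dg 0 j) (u0 j) s) (h1 : ¬ ∃ v, D 0 v = u0)
    (h2 : ∀ i : Fin n, ∃ v, D 0 v = (X i : MvPolynomial (Fin n) k) • u0) (r : ℕ) (hr : r ≤ n) :
    ∃ u : Fin (rk r) → MvPolynomial (Fin n) k, (∀ j, Hm (dg r j) (u j) (s + r)) ∧
      (¬ ∃ v, u - D r v ∈ VQ r (rk r)) ∧
      ∀ i : Fin n, ∃ v, (X i : MvPolynomial (Fin n) k) • u - D r v ∈ VQ r (rk r) := by
  induction r with
  | zero =>
    refine ⟨u0, h0, ?_, fun i => ?_⟩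
    · rintro ⟨v, hv⟩
      exact h1 ⟨v, (sub_eq_zero.1 (VQ_zero hv)).symm⟩
    · obtain ⟨v, hv⟩ := h2 i
      exact ⟨v, by rw [hv, sub_self]; exact Submodule.zero_mem _⟩
  | succ r ih =>
    obtain ⟨u, hu, hu1, hu2⟩ := ih (by omega)
    let x : Fin n := ⟨r, by omega⟩
    obtain ⟨v', hv'⟩ := hu2 x
    have hxu : ∀ j, Hm (dg r j) (((X x : MvPolynomial (Fin n) k) • u) j) (s + (r + 1)) := by
      intro j
      have := Hm.mul (Hm.of_isHomogeneous (isHomogeneous_X k x)) (hu j)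
      have e : 1 + (s + r) = s + (r + 1) := by omega
      rw [e] at this
      exact this
    let v := vcomp (dg (r + 1)) (s + (r + 1)) v'
    have hv : (X x : MvPolynomial (Fin n) k) • u - D r v ∈ VQ r (rk r) := by
      have e1 : D r v = vcomp (dg r) (s + (r + 1)) (D r v') := vcomp_comm _ _ (D r) (hgr r) _ _
      have e2 : (X x : MvPolynomial (Fin n) k) • u = vcomp (dg r) (s + (r + 1)) ((X x : MvPolynomial (Fin n) k) • u) := by
        funext j
        exact (hcomp_of_Hm (hxu j)).symm
      rw [e1, e2, ← map_sub]
      exact mem_VQ.2 fun j => QI_hcomp _ _ _ (mem_VQ.1 hv' j)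
    refine ⟨v, fun j => Hm_hcomp _ _ _, ?_, fun i => ?_⟩
    · rintro ⟨w, hw⟩
      obtain ⟨a, ha, b, hab⟩ := VQ_decomp x hw
      apply hu1
      refine ⟨b, VQ_cancel x ?_⟩
      have h3 : D r v = D r a + (X x : MvPolynomial (Fin n) k) • D r b := by
        have := congrArg (D r) hab
        rw [map_sub, hDD, sub_zero, map_add, map_smul] at this
        exact this
      have e : (X x : MvPolynomial (Fin n) k) • (u - D r b) =
          ((X x : MvPolynomial (Fin n) k) • u - D r v) + D r a := by
        rw [h3, smul_sub]; abel
      rw [e]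
      exact Submodule.add_mem _ hv (VQ_map rk D r r ha)
    · obtain ⟨vi, hvi⟩ := hu2 i
      have h4 : D r ((X i : MvPolynomial (Fin n) k) • v - (X x : MvPolynomial (Fin n) k) • vi) ∈ VQ r (rk r) := by
        have e : D r ((X i : MvPolynomial (Fin n) k) • v - (X x : MvPolynomial (Fin n) k) • vi) =
            (X x : MvPolynomial (Fin n) k) • ((X i : MvPolynomial (Fin n) k) • u - D r vi) -
            (X i : MvPolynomial (Fin n) k) • ((X x : MvPolynomial (Fin n) k) • u - D r v) := by
          rw [map_sub, map_smul, map_smul, smul_sub, smul_sub, smul_comm (X x) (X i) u]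
          abel
        rw [e]
        exact Submodule.sub_mem _ (Submodule.smul_mem _ _ hvi) (Submodule.smul_mem _ _ hv)
      obtain ⟨w, hw⟩ := exact_mod rk D hDD hex r (by omega) r le_rfl _ h4
      refine ⟨w, ?_⟩
      have e : (X i : MvPolynomial (Fin n) k) • v - D (r + 1) w =
          ((X i : MvPolynomial (Fin n) k) • v - (X x : MvPolynomial (Fin n) k) • vi - D (r + 1) w) +
          (X x : MvPolynomial (Fin n) k) • vi := by abel
      rw [e]
      exact Submodule.add_mem _ (VQ_mono _ _ hw) (VQ_X x _ vi)

theorem zigzag_end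
    (hDD : ∀ i v, D i (D (i + 1) v) = 0)
    (hex : ∀ i v, D i v = 0 → ∃ u, D (i + 1) u = v)
    (hgr : ∀ i j l, Hm (dg i l) (D i (Pi.single j 1) l) (dg (i + 1) j))
    (s : ℕ) (u0 : Fin (rk 0) → MvPolynomial (Fin n) k)
    (h0 : ∀ j, Hm (dg 0 j) (u0 j) s) (h1 : ¬ ∃ v, D 0 v = u0)
    (h2 : ∀ i : Fin n, ∃ v, D 0 v = (X i : MvPolynomial (Fin n) k) • u0) :
    ∃ j, dg n j = s + n := by
  obtain ⟨u, hu, hu1, -⟩ := zigzag rk dg D hDD hex hgr s u0 h0 h1 h2 n le_rfl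
  have h3 : u ∉ VQ n (rk n) := fun h => hu1 ⟨0, by rwa [map_zero, sub_zero]⟩
  rw [mem_VQ] at h3
  push Not at h3
  obtain ⟨j, hj⟩ := h3
  have := hu j 0 (QI_full hj)
  exact ⟨j, by simpa using this⟩

end Zigzag

theorem lower_bound (hn : 1 ≤ n) {J : Ideal (MvPolynomial (Fin n) k)} (F : GradedFreeRes k (Fin n) J) (u : Fin n →₀ ℕ)
    (h1 : monomial u (1 : k) ∉ J) (h2 : ∀ i, X i * monomial u (1 : k) ∈ J) :
    ∃ b, F.deg (n - 1) b = u.degree + n := by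
  let S := MvPolynomial (Fin n) k
  let rk : ℕ → ℕ := fun i => Nat.casesOn i 1 F.rk
  let dg : ∀ i, Fin (rk i) → ℕ := fun i => match i with
    | 0 => fun _ => 0
    | i + 1 => F.deg i
  let cv : ∀ m, (Fin m →₀ S) ≃ₗ[S] (Fin m → S) := fun m => Finsupp.linearEquivFunOnFinite S S (Fin m)
  have cvs : ∀ m (j : Fin m), (cv m).symm (Pi.single j 1) = Finsupp.single j 1 := fun m j =>
    Finsupp.linearEquivFunOnFinite_symm_single _ _ _ _ _
  let D : ∀ i, (Fin (rk (i + 1)) → S) →ₗ[S] (Fin (rk i) → S) := fun i => match i with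
    | 0 => LinearMap.pi fun _ => F.aug ∘ₗ (cv (F.rk 0)).symm.toLinearMap
    | i + 1 => (cv (F.rk i)).toLinearMap ∘ₗ F.d i ∘ₗ (cv (F.rk (i + 1))).symm.toLinearMap
  have D0 : ∀ v j, D 0 v j = F.aug ((cv (F.rk 0)).symm v) := fun v j => rfl
  have D1 : ∀ i v, D (i + 1) v = cv (F.rk i) (F.d i ((cv (F.rk (i + 1))).symm v)) := fun i v => rfl
  have hD0 : ∀ v, D 0 v = 0 ↔ F.aug ((cv (F.rk 0)).symm v) = 0 := fun v =>
    ⟨fun h => congrFun h (0 : Fin 1), fun h => funext fun j => h⟩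
  have hD1 : ∀ i v, D (i + 1) v = 0 ↔ F.d i ((cv (F.rk (i + 1))).symm v) = 0 := fun i v => by
    rw [D1, LinearEquiv.map_eq_zero_iff]
  have hDD : ∀ i v, D i (D (i + 1) v) = 0 := by
    intro i v
    match i with
    | 0 =>
      rw [hD0, D1, LinearEquiv.symm_apply_apply]
      have : F.d 0 ((cv (F.rk (0 + 1))).symm v) ∈ LinearMap.ker F.aug := by
        rw [← F.exact_zero]; exact ⟨_, rfl⟩
      exact this
    | i + 1 =>
      rw [hD1, D1, LinearEquiv.symm_apply_apply]
      have : F.d (i + 1) ((cv (F.rk (i + 1 + 1))).symm v) ∈ LinearMap.ker (F.d i) := by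
        rw [← F.exact_succ]; exact ⟨_, rfl⟩
      exact this
  have hex : ∀ i v, D i v = 0 → ∃ u, D (i + 1) u = v := by
    intro i v hv
    match i with
    | 0 =>
      rw [hD0] at hv
      have : (cv (F.rk 0)).symm v ∈ LinearMap.range (F.d 0) := by rw [F.exact_zero]; exact hv
      obtain ⟨u, hu⟩ := this
      refine ⟨cv _ u, ?_⟩
      rw [D1, LinearEquiv.symm_apply_apply, hu, LinearEquiv.apply_symm_apply]
    | i + 1 =>
      rw [hD1] at hv
      have : (cv (F.rk (i + 1))).symm v ∈ LinearMap.range (F.d (i + 1)) := by rw [F.exact_succ]; exact hv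
      obtain ⟨u, hu⟩ := this
      refine ⟨cv _ u, ?_⟩
      rw [D1, LinearEquiv.symm_apply_apply, hu, LinearEquiv.apply_symm_apply]
  have hgr : ∀ i j l, Hm (dg i l) (D i (Pi.single j 1) l) (dg (i + 1) j) := by
    intro i j l
    match i with
    | 0 =>
      rw [D0]
      erw [cvs]
      exact Hm.of_isHomogeneous (F.aug_graded j)
    | i + 1 =>
      rw [D1]
      erw [cvs]
      show Hm (F.deg i l) (F.d i (Finsupp.single j 1) l) (F.deg (i + 1) j)
      rcases F.d_graded i j l with h | ⟨m, hm, hh⟩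
      · rw [h]; exact Hm.zero _ _
      · intro a ha
        have := Hm.of_isHomogeneous hh a ha
        omega
  obtain ⟨j, hj⟩ := zigzag_end rk dg D hDD hex hgr u.degree (fun _ => monomial u 1)
    (fun j => Hm_monomial u)
    (by
      rintro ⟨v, hv⟩
      apply h1
      rw [← F.aug_range]
      exact ⟨_, congrFun hv (0 : Fin 1)⟩)
    (by
      intro i
      have := h2 i
      rw [← F.aug_range] at this
      obtain ⟨v, hv⟩ := this
      refine ⟨cv _ v, funext fun j => ?_⟩
      rw [D0, LinearEquiv.symm_apply_apply, hv]
      rfl)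
  obtain ⟨m, rfl⟩ : ∃ m, n = m + 1 := ⟨n - 1, by omega⟩
  exact ⟨j, hj⟩

end Lower

section Final

variable {n : ℕ} [NeZero n]

/-- The socle exponent. -/
def socU (w : Fin n → ℕ) (m : Fin n) (t : ℕ) : Fin n →₀ ℕ :=
  Finsupp.equivFunOnFinite.symm (fun p => w p - 1) + EE w (Pi.single m t)

theorem socU_apply (w : Fin n → ℕ) (m : Fin n) (t : ℕ) (p : Fin n) :
    socU w m t p = (w p - 1) + (w p * (Pi.single m t : Fin n → ℕ) p + (Pi.single m t : Fin n → ℕ) (p + 1)) := rfl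

theorem socU_degree (w : Fin n → ℕ) (m : Fin n) (t : ℕ) :
    (socU w m t).degree = ∑ p, (w p - 1) + t * (w m + 1) := by
  rw [Finsupp.degree_eq_sum]
  simp only [socU_apply, Finset.sum_add_distrib]
  have h1 : ∑ p, w p * (Pi.single m t : Fin n → ℕ) p = w m * t := by
    rw [Finset.sum_eq_single m]
    · simp
    · intro b _ hb; simp [hb]
    · simp
  have h2 : ∑ p, (Pi.single m t : Fin n → ℕ) (p + 1) = t := by
    refine (Equiv.sum_comp (Equiv.addRight (1 : Fin n)) (Pi.single m t : Fin n → ℕ)).trans ?_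
    simp
  rw [h1, h2]; ring

theorem socU_notMem (hn : 3 ≤ n) (w : Fin n → ℕ) (hw : ∀ i, 2 ≤ w i) (m : Fin n) (t : ℕ) :
    socU w m t ∉ powU w (t + 1) := by
  rintro ⟨c, hc, hle⟩
  have h : ∀ p, w p * c p + c (p + 1) ≤ (w p - 1) + (w p * (Pi.single m t : Fin n → ℕ) p
      + (Pi.single m t : Fin n → ℕ) (p + 1)) := fun p => hle p
  have z : ∀ q, q ≠ m → q ≠ m - 1 → c q = 0 := by
    intro q h1 h2
    have h3 : q + 1 ≠ m := fun e => h2 (eq_sub_of_add_eq e)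
    have := h q
    rw [Pi.single_eq_of_ne h1, Pi.single_eq_of_ne h3] at this
    by_contra h0
    have h5 : w q * 1 ≤ w q * c q := Nat.mul_le_mul_left _ (by omega)
    have := hw q
    omega
  have hs : c m + c (m - 1) = t + 1 := by
    rw [← hc]
    symm
    exact Finset.sum_eq_add m (m - 1) (fin_ne1' hn m).symm (fun q _ hq => z q hq.1 hq.2)
      (by simp) (by simp)
  have hm : c m ≤ t := by
    have := h m
    rw [Pi.single_eq_same, Pi.single_eq_of_ne (fin_ne1 hn m)] at this
    by_contra h0
    have h5 : w m * (t + 1) ≤ w m * c m := Nat.mul_le_mul_left _ (by omega)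
    have := hw m
    rw [mul_add] at h5
    omega
  have h1 := h (m - 1)
  rw [sub_add_cancel, Pi.single_eq_same, Pi.single_eq_of_ne (fin_ne1' hn m)] at h1
  have h2 := hw (m - 1)
  obtain ⟨a, ha⟩ : ∃ a, w (m - 1) = a + 2 := ⟨w (m - 1) - 2, by omega⟩
  obtain ⟨d, hd⟩ : ∃ d, c (m - 1) = d + 1 := ⟨c (m - 1) - 1, by omega⟩
  rw [ha, hd] at h1
  have h6 : (a + 2) * (d + 1) = a * d + a + 2 * d + 2 := by ring
  have h7 : a + 2 - 1 = a + 1 := by omega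
  rw [h6, h7] at h1
  have := Nat.zero_le (a * d)
  generalize a * d = x at *
  omega

theorem socU_mem (hn : 3 ≤ n) (w : Fin n → ℕ) (hw : ∀ i, 2 ≤ w i) (m : Fin n) (t : ℕ) (i : Fin n) :
    Finsupp.single i 1 + socU w m t ∈ powU w (t + 1) := by
  refine ⟨Pi.single m t + Pi.single i 1, by simp [Finset.sum_add_distrib], fun p => ?_⟩
  rw [EE_apply, Finsupp.add_apply, socU_apply, Pi.add_apply, Pi.add_apply, mul_add]
  have := hw p
  have key : w p * (Pi.single i 1 : Fin n → ℕ) p + (Pi.single i 1 : Fin n → ℕ) (p + 1) ≤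
      (Finsupp.single i 1 : Fin n →₀ ℕ) p + (w p - 1) := by
    by_cases hp : p = i
    · subst hp
      rw [Pi.single_eq_same, Pi.single_eq_of_ne (fin_ne1 hn p), Finsupp.single_eq_same]
      omega
    · rw [Pi.single_eq_of_ne hp]
      have h1 : (Pi.single i 1 : Fin n → ℕ) (p + 1) ≤ 1 := by
        rw [Pi.single_apply]; split_ifs <;> omega
      omega
  omega

theorem reg_aux (k : Type) [Field k] (hn : 3 ≤ n) (w : Fin n → ℕ) (hw : ∀ i, 2 ≤ w i) (m : Fin n)
    (hm : ∀ i, w i ≤ w m) (t : ℕ) :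
    reg k (Fin n) ((cycIdeal k n w) ^ (t + 1)) = ∑ p, (w p - 1) + 1 + t * (w m + 1) := by
  have hR : RU k (powU w (t + 1)) _ := powU_reg hn hw (w m) hm t
  rw [cycIdeal_pow]
  obtain ⟨F0, hF0⟩ := exists_res hR
  have up : ∀ r ∈ { r | ∃ i j : ℕ, betti k (Fin n) (MI (powU w (t + 1))) i j ≠ 0 ∧ r = j - i },
      r ≤ ∑ p, (w p - 1) + 1 + t * (w m + 1) := by
    rintro r ⟨i, j, hb, rfl⟩
    have h1 : betti k (Fin n) (MI (powU w (t + 1))) i j ≤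
      (Finset.univ.filter (fun b => F0.deg i b = j)).card := Nat.sInf_le ⟨F0, rfl⟩
    have h2 : 0 < (Finset.univ.filter (fun b => F0.deg i b = j)).card := by omega
    obtain ⟨b, hb'⟩ := Finset.card_pos.1 h2
    have h3 := (Finset.mem_filter.1 hb').2
    have := hF0 i b
    omega
  refine le_antisymm (csSup_le' up) (le_csSup ⟨_, up⟩ ?_)
  refine ⟨n - 1, (socU w m t).degree + n, ?_, ?_⟩
  · obtain ⟨F, hF⟩ := Nat.sInf_mem (s := { r | ∃ F : GradedFreeRes k (Fin n) (MI (powU w (t + 1))),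
      r = (Finset.univ.filter (fun b => F.deg (n - 1) b = (socU w m t).degree + n)).card })
      ⟨_, F0, rfl⟩
    have e : betti k (Fin n) (MI (powU w (t + 1))) (n - 1) ((socU w m t).degree + n) = _ := hF
    rw [e]
    obtain ⟨b, hb⟩ := lower_bound (by omega) F (socU w m t)
      (fun h => socU_notMem hn w hw m t (h _ (by simp)))
      (fun i a ha => by
        have e : X i * monomial (socU w m t) (1 : k) =
            monomial (Finsupp.single i 1 + socU w m t) 1 := by
          rw [X, monomial_mul, one_mul]
        rw [e, coeff_monomial] at ha
        split_ifs at ha with h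
        · rw [← h]; exact socU_mem hn w hw m t i
        · exact absurd rfl ha)
    exact (Finset.card_pos.2 ⟨b, Finset.mem_filter.2 ⟨Finset.mem_univ _, hb⟩⟩).ne'
  · rw [socU_degree]; omega

theorem reg_final (k : Type) [Field k] (hn : 3 ≤ n) (w : Fin n → ℕ) (hw : ∀ i, 2 ≤ w i) (t : ℕ)
    (ht : 1 ≤ t) : reg k (Fin n) ((cycIdeal k n w) ^ t) =
      (∑ i, w i) - n + 1 + (t - 1) * (Finset.univ.sup w + 1) := by
  obtain ⟨t, rfl⟩ : ∃ s, t = s + 1 := ⟨t - 1, by omega⟩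
  obtain ⟨m, -, hm⟩ := Finset.exists_mem_eq_sup (Finset.univ : Finset (Fin n)) ⟨0, by simp⟩ w
  rw [reg_aux k hn w hw m (fun i => hm ▸ Finset.le_sup (Finset.mem_univ i)) t, hm]
  have h : ∑ p, (w p - 1) + n = ∑ p, w p := by
    have : ∑ p : Fin n, 1 = n := by simp
    refine (congrArg (fun x => ∑ p, (w p - 1) + x) this.symm).trans ?_
    show ∑ p, (w p - 1) + ∑ p : Fin n, 1 = _
    rw [← Finset.sum_add_distrib]
    refine Finset.sum_congr rfl fun p _ => ?_
    have := hw p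
    omega
  have h2 : t + 1 - 1 = t := rfl
  rw [h2, ← h]
  omega

end Final

/-- for the vertex-weighted oriented `n`-cycle with all weights at
least `2`, `reg (I(C_n)^t) = Σ w(x) - n + 1 + (t-1)(w+1)` for all `t ≥ 1`, where
`w` is the largest weight. -/
theorem reg_power_cycle
    (hn : 3 ≤ n) (w : Fin n → ℕ) (hw : ∀ i, 2 ≤ w i) (t : ℕ) (ht : 1 ≤ t) :
    reg k (Fin n) ((cycIdeal k n w) ^ t) =
      (∑ i, w i) - n + 1 + (t - 1) * (Finset.univ.sup w + 1) := by
  exact reg_final k hn w hw t ht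

end PaperReg
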